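/- arXiv:2007.08169 — 5 statements merged into one kernel-verified Lean document; each statement's English description precedes it below -/
import Mathlib

section
/- For every N ∈ ℕ, every f ∈ E_N and all multi-indices α, β ∈ ℕ^n, one has ‖x^α ∂_x^β f‖_{L²(ℝ^n)} ≤ 2^{(|α|+|β|)/2} √( (N+|α|+|β|)! / N! ) ‖f‖_{L²(ℝ^n)}. -/
open MeasureTheory
open scoped BigOperators ENNReal NNReal

noncomputable section

abbrev En (n : ℕ) := EuclideanSpace ℝ (Fin n)

/-- One-dimensional Hermite function. -/
def hermite1 (k : ℕ) (x : ℝ) : ℝ :=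
  (-1 : ℝ) ^ k * ((2 ^ k * (k.factorial : ℝ) * Real.sqrt Real.pi) ^ (-(1/2 : ℝ))) *
    Real.exp (x ^ 2 / 2) * iteratedDeriv k (fun y => Real.exp (-y ^ 2)) x

/-- Tensorized Hermite function on ℝⁿ. -/
def hermiteFun (n : ℕ) (α : Fin n → ℕ) (x : En n) : ℂ :=
  ∏ j, (hermite1 (α j) (x j) : ℂ)

/-- The span E_N of Hermite functions with |α| ≤ N. -/
def hermiteSpan (n N : ℕ) : Submodule ℂ (En n → ℂ) :=
  Submodule.span ℂ {g | ∃ α : Fin n → ℕ, (∑ j, α j) ≤ N ∧ g = hermiteFun n α}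

/-- Partial derivative in direction j. -/
def pderiv1 {n : ℕ} (j : Fin n) (f : En n → ℂ) : En n → ℂ :=
  fun x => fderiv ℝ f x (EuclideanSpace.single j (1 : ℝ))

/-- Multi-index partial derivative ∂^β. -/
def pderivMulti {n : ℕ} (β : Fin n → ℕ) (f : En n → ℂ) : En n → ℂ :=
  (List.finRange n).foldr (fun j g => (pderiv1 j)^[β j] g) f

/-- Monomial x^α. -/
def monomial (n : ℕ) (α : Fin n → ℕ) (x : En n) : ℝ := ∏ j, (x j) ^ (α j)

/-- L² norm on ℝⁿ. -/
def L2norm (n : ℕ) (f : En n → ℂ) : ℝ := Real.sqrt (∫ x, ‖f x‖ ^ 2)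

/-- Japanese bracket ⟨x⟩. -/
def jap (n : ℕ) (x : En n) : ℝ := Real.sqrt (1 + ‖x‖ ^ 2)

/-!
With the unnormalised annihilation and creation operators `A = x_j + ∂_j` and `C = x_j - ∂_j` one
has `A Φ_α = √(2α_j) Φ_{α-e_j}` and `C Φ_α = √(2(α_j+1)) Φ_{α+e_j}`, so `x_j = (A + C) / 2` and
`∂_j = (A - C) / 2` map `E_N` to `E_{N+1}`. For `f = ∑ c_α Φ_α` in `E_N` the parallelogram law gives
`‖x_j f‖² + ‖∂_j f‖² = (‖A f‖² + ‖C f‖²) / 2 = ∑ (2α_j + 1) |c_α|² ≤ (2N + 1) ‖f‖²`.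
Hence each of the `k = |α| + |β|` first-order factors of `x^α ∂^β`, the `i`-th of them acting on
`E_{N+i-1}`, costs at most `√(2(N+i))`, and the product of these constants over `i = 1, …, k` is
`2^{k/2} √((N+k)! / N!)`.
-/

section OneDimensional

open Polynomial

theorem derivative_hermite_succ (k : ℕ) :
    derivative (hermite (k + 1)) = ((k + 1 : ℕ) : ℤ[X]) * hermite k := by
  induction k with
  | zero => simp
  | succ k ih =>
    rw [hermite_succ (k + 1), derivative_sub, derivative_mul, derivative_X, ih, derivative_mul,
      derivative_natCast, hermite_succ k]
    push_cast
    ring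

theorem integrable_polynomial_mul_exp_neg_mul_sq {b : ℝ} (hb : 0 < b) (P : ℝ[X]) :
    Integrable (fun x : ℝ ↦ P.eval x * Real.exp (-b * x ^ 2)) := by
  induction P using Polynomial.induction_on' with
  | add P Q hP hQ =>
    simp only [eval_add, add_mul]
    exact hP.add hQ
  | monomial m a =>
    have hm : (-1 : ℝ) < m := neg_one_lt_zero.trans_le m.cast_nonneg
    simpa [mul_assoc] using (integrable_rpow_mul_exp_neg_mul_sq hb hm).const_mul a

theorem memLp_two_polynomial_mul_exp_neg_mul_sq {b : ℝ} (hb : 0 < b) (P : ℝ[X]) :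
    MemLp (fun x : ℝ ↦ P.eval x * Real.exp (-b * x ^ 2)) 2 := by
  have hcont : Continuous (fun x : ℝ ↦ P.eval x * Real.exp (-b * x ^ 2)) := by fun_prop
  rw [memLp_two_iff_integrable_sq hcont.aestronglyMeasurable]
  refine (integrable_polynomial_mul_exp_neg_mul_sq (mul_pos two_pos hb) (P ^ 2)).congr
    (.of_forall fun x ↦ ?_)
  simp only [eval_pow, mul_pow, ← Real.exp_nat_mul]
  ring_nf

theorem iteratedDeriv_exp_neg_sq (k : ℕ) (x : ℝ) :
    iteratedDeriv k (fun y : ℝ ↦ Real.exp (-y ^ 2)) x =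
      (-√2) ^ k * aeval (√2 * x) (hermite k) * Real.exp (-x ^ 2) := by
  have hscale (y : ℝ) : (√2 * y) ^ 2 / 2 = y ^ 2 := by
    rw [mul_pow, Real.sq_sqrt zero_le_two]; ring
  have h := iteratedDeriv_comp_const_mul (n := k) (f := fun y : ℝ ↦ Real.exp (-(y ^ 2 / 2)))
    (by fun_prop) √2
  simp only [hscale, iteratedDeriv_eq_iterate, deriv_gaussian_eq_hermite_mul_gaussian] at h
  rw [iteratedDeriv_eq_iterate, h, neg_pow]
  ring

/-- The constant `cₖ` with `φₖ(x) = cₖ Heₖ(√2 x) e^{-x²/2}`, where `Heₖ` is Mathlib's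
(probabilists') Hermite polynomial. The change of variable `√2 x` absorbs the factor `2ᵏ`. -/
def hermiteNorm (k : ℕ) : ℝ := (√(k.factorial * √Real.pi))⁻¹

theorem hermiteNorm_eq_sqrt_mul_succ (k : ℕ) :
    hermiteNorm k = √(k + 1) * hermiteNorm (k + 1) := by
  have hpos : √((k : ℝ) + 1) ≠ 0 := by positivity
  rw [hermiteNorm, hermiteNorm, Nat.factorial_succ, Nat.cast_mul, mul_assoc, Nat.cast_succ,
    Real.sqrt_mul (by positivity) (_ * _), mul_inv, mul_inv_cancel_left₀ hpos]

theorem hermite1_eq (k : ℕ) (x : ℝ) :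
    hermite1 k x =
      hermiteNorm k * aeval (√2 * x) (hermite k) * Real.exp (-x ^ 2 / 2) := by
  have hnorm : (2 ^ k * (k.factorial : ℝ) * √Real.pi) ^ (-(1 / 2 : ℝ)) * √2 ^ k =
      hermiteNorm k := by
    have hpow : (2 : ℝ) ^ k = (√2 ^ k) ^ 2 := by
      rw [pow_right_comm, Real.sq_sqrt zero_le_two]
    have hne : √2 ^ k ≠ 0 := by positivity
    rw [hermiteNorm, hpow, Real.rpow_neg (by positivity), ← Real.sqrt_eq_rpow, mul_assoc,
      Real.sqrt_mul (by positivity), Real.sqrt_sq (by positivity), mul_inv, mul_right_comm,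
      inv_mul_cancel₀ hne, one_mul]
  have hexp : Real.exp (x ^ 2 / 2) * Real.exp (-x ^ 2) = Real.exp (-x ^ 2 / 2) := by
    rw [← Real.exp_add]; ring_nf
  have hsign : (-1 : ℝ) ^ k * (-√2) ^ k = √2 ^ k := by simp [← mul_pow]
  rw [hermite1, iteratedDeriv_exp_neg_sq, ← hnorm, ← hexp, ← hsign]
  ring

theorem memLp_two_hermite1 (k : ℕ) : MemLp (hermite1 k) 2 := by
  set P : ℝ[X] := ((hermite k).map (Int.castRingHom ℝ)).comp (C √2 * X) with hP
  refine ((memLp_two_polynomial_mul_exp_neg_mul_sq one_half_pos P).const_mul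
    (hermiteNorm k)).ae_eq (.of_forall fun x ↦ ?_)
  simp only [hermite1_eq, hP, eval_comp, eval_mul, eval_C, eval_X, aeval_def, eval₂_eq_eval_map,
    algebraMap_int_eq]
  ring_nf

theorem hasDerivAt_hermite1 (k : ℕ) (x : ℝ) :
    HasDerivAt (hermite1 k) (hermiteNorm k * (√2 *
      aeval (√2 * x) (derivative (hermite k)) - x * aeval (√2 * x) (hermite k)) *
        Real.exp (-x ^ 2 / 2)) x := by
  have hpoly : HasDerivAt (fun y : ℝ ↦ aeval (√2 * y) (hermite k))
      (aeval (√2 * x) (derivative (hermite k)) * √2) x := by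
    refine (HasDerivAt.comp x ((hermite k).hasDerivAt_aeval (√2 * x))
      ((hasDerivAt_id' x).const_mul √2)).congr_deriv ?_
    rw [mul_one]
  have hexp : HasDerivAt (fun y : ℝ ↦ Real.exp (-y ^ 2 / 2)) (Real.exp (-x ^ 2 / 2) * -x) x := by
    refine ((hasDerivAt_pow 2 x).fun_neg.div_const 2).exp.congr_deriv ?_
    ring
  refine (((hpoly.mul hexp).const_mul (hermiteNorm k)).congr_deriv
    (by ring)).congr_of_eventuallyEq (.of_forall fun y ↦ ?_)
  simp only [hermite1_eq, mul_assoc, Pi.mul_apply]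

theorem differentiable_hermite1 (k : ℕ) : Differentiable ℝ (hermite1 k) := fun x ↦
  (hasDerivAt_hermite1 k x).differentiableAt

theorem mul_add_deriv_hermite1 (k : ℕ) (x : ℝ) :
    x * hermite1 k x + deriv (hermite1 k) x = √(2 * k) * hermite1 (k - 1) x := by
  rw [(hasDerivAt_hermite1 k x).deriv, hermite1_eq]
  cases k with
  | zero =>
    simp only [hermite_zero, map_one, derivative_one, map_zero, Nat.cast_zero, mul_zero,
      Real.sqrt_zero]
    ring
  | succ k =>
    have h : (√(k + 1)) ^ 2 = (k + 1 : ℝ) := Real.sq_sqrt (by positivity)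
    rw [derivative_hermite_succ, Nat.add_sub_cancel, hermite1_eq, hermiteNorm_eq_sqrt_mul_succ k,
      Real.sqrt_mul zero_le_two]
    simp only [map_mul, map_natCast]
    push_cast
    linear_combination -(hermiteNorm (k + 1) * Real.exp (-x ^ 2 / 2) * √2 *
      aeval (√2 * x) (hermite k)) * h

theorem mul_sub_deriv_hermite1 (k : ℕ) (x : ℝ) :
    x * hermite1 k x - deriv (hermite1 k) x = √(2 * (k + 1)) * hermite1 (k + 1) x := by
  have h : √2 ^ 2 = (2 : ℝ) := Real.sq_sqrt zero_le_two
  rw [(hasDerivAt_hermite1 k x).deriv, hermite1_eq, hermite1_eq, hermiteNorm_eq_sqrt_mul_succ k,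
    Real.sqrt_mul zero_le_two, hermite_succ, map_sub, map_mul, aeval_X]
  linear_combination -(√(k + 1) * hermiteNorm (k + 1) *
    x * aeval (√2 * x) (hermite k) * Real.exp (-x ^ 2 / 2)) * h

theorem integrable_hermite1_mul (k l : ℕ) : Integrable (fun x ↦ hermite1 k x * hermite1 l x) :=
  (memLp_two_hermite1 k).integrable_mul (memLp_two_hermite1 l)

theorem sqrt_mul_integral_hermite1_succ_mul (k l : ℕ) :
    √(2 * (k + 1)) * ∫ x, hermite1 (k + 1) x * hermite1 l x =
      √(2 * l) * ∫ x, hermite1 k x * hermite1 (l - 1) x := by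
  have hraise := (integrable_hermite1_mul (k + 1) l).const_mul √(2 * (k + 1))
  have hlower := (integrable_hermite1_mul k (l - 1)).const_mul √(2 * l)
  have hderiv (x : ℝ) : HasDerivAt (fun x ↦ hermite1 k x * hermite1 l x)
      (√(2 * l) * (hermite1 k x * hermite1 (l - 1) x) -
        √(2 * (k + 1)) * (hermite1 (k + 1) x * hermite1 l x)) x := by
    refine ((differentiable_hermite1 k x).hasDerivAt.mul
      (differentiable_hermite1 l x).hasDerivAt).congr_deriv ?_
    linear_combination hermite1 k x * mul_add_deriv_hermite1 l x -
      hermite1 l x * mul_sub_deriv_hermite1 k x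
  have h := integral_eq_zero_of_hasDerivAt_of_integrable hderiv (hlower.sub hraise)
    (integrable_hermite1_mul k l)
  rw [integral_sub hlower hraise, integral_const_mul, integral_const_mul] at h
  exact (sub_eq_zero.1 h).symm

theorem integral_hermite1_zero_mul_self : ∫ x, hermite1 0 x * hermite1 0 x = 1 := by
  have h (x : ℝ) : hermite1 0 x * hermite1 0 x = (√Real.pi)⁻¹ * Real.exp (-1 * x ^ 2) := by
    rw [hermite1_eq, mul_mul_mul_comm, ← Real.exp_add, mul_mul_mul_comm, hermiteNorm, ← mul_inv]
    simp
  simp_rw [h]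
  rw [integral_const_mul, integral_gaussian, div_one, inv_mul_cancel₀ (by positivity)]

theorem integral_hermite1_mul (k l : ℕ) :
    ∫ x, hermite1 k x * hermite1 l x = if k = l then 1 else 0 := by
  induction k generalizing l with
  | zero =>
    cases l with
    | zero => simpa using integral_hermite1_zero_mul_self
    | succ l =>
      have h := sqrt_mul_integral_hermite1_succ_mul l 0
      simp_rw [mul_comm (hermite1 0 _)]
      simpa [(by positivity : √((l : ℝ) + 1) ≠ 0)] using h
  | succ k ih =>
    have hpos : √(2 * ((k : ℝ) + 1)) ≠ 0 := by positivity
    rw [← mul_right_inj' hpos, sqrt_mul_integral_hermite1_succ_mul k l, ih]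
    cases l with
    | zero => simp
    | succ l => by_cases h : k = l <;> simp [h]

end OneDimensional

section L2

open scoped ComplexConjugate

variable {ι X 𝕜 : Type*} [MeasurableSpace X] {μ : Measure X} [RCLike 𝕜] {v : ι → X → 𝕜}

theorem memLp_linearCombination {p : ℝ≥0∞} (hv : ∀ i, MemLp (v i) p μ) (c : ι →₀ 𝕜) :
    MemLp (Finsupp.linearCombination 𝕜 v c) p μ :=
  memLp_finsetSum' c.support fun i _ ↦ (hv i).const_smul (c i)

theorem integral_norm_sq_linearCombination_of_pairwise_orthogonal (hv : ∀ i, MemLp (v i) 2 μ)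
    (horth : Pairwise fun i k ↦ ∫ x, v i x * conj (v k x) ∂μ = 0) (c : ι →₀ 𝕜) :
    ∫ x, ‖Finsupp.linearCombination 𝕜 v c x‖ ^ 2 ∂μ =
      c.sum fun i a ↦ ‖a‖ ^ 2 * ∫ x, ‖v i x‖ ^ 2 ∂μ := by
  have hint (i k : ι) : Integrable (fun x ↦ c i * conj (c k) * (v i x * conj (v k x))) μ :=
    ((hv i).integrable_mul (hv k).star).const_mul _
  have hexpand (x : X) : ((‖Finsupp.linearCombination 𝕜 v c x‖ ^ 2 : ℝ) : 𝕜) =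
      ∑ i ∈ c.support, ∑ k ∈ c.support, c i * conj (c k) * (v i x * conj (v k x)) := by
    simp only [Finsupp.linearCombination_apply, Finsupp.sum, Finset.sum_apply, Pi.smul_apply,
      smul_eq_mul, RCLike.ofReal_pow, ← RCLike.mul_conj, map_sum, map_mul, Finset.sum_mul_sum,
      mul_mul_mul_comm]
  have hdiag (i : ι) : ∫ x, v i x * conj (v i x) ∂μ = ((∫ x, ‖v i x‖ ^ 2 ∂μ : ℝ) : 𝕜) := by
    simp only [RCLike.mul_conj, ← integral_ofReal, RCLike.ofReal_pow]
  apply RCLike.ofReal_injective (K := 𝕜)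
  rw [← integral_ofReal, integral_congr_ae (.of_forall hexpand), Finsupp.sum, RCLike.ofReal_sum,
    integral_finsetSum _ fun i _ ↦ integrable_finsetSum _ fun k _ ↦ hint i k]
  refine Finset.sum_congr rfl fun i hi ↦ ?_
  simp only [integral_finsetSum _ fun k _ ↦ hint i k, integral_const_mul]
  rw [Finset.sum_eq_single_of_mem i hi fun k _ hk ↦ by rw [horth hk.symm, mul_zero], hdiag,
    RCLike.mul_conj, RCLike.ofReal_mul, RCLike.ofReal_pow]

end L2

section EuclideanProduct

variable {ι 𝕜 : Type*} [Fintype ι] [RCLike 𝕜] {f : ι → ℝ → 𝕜}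

theorem integrable_euclideanSpace_prod (hf : ∀ i, Integrable (f i)) :
    Integrable (fun x : EuclideanSpace ℝ ι ↦ ∏ i, f i (x i)) := by
  rw [← (PiLp.volume_preserving_toLp ι).integrable_comp_emb
    (MeasurableEquiv.toLp 2 _).measurableEmbedding]
  exact Integrable.fintype_prod hf

theorem integral_euclideanSpace_prod :
    ∫ x : EuclideanSpace ℝ ι, ∏ i, f i (x i) = ∏ i, ∫ t, f i t := by
  rw [← (PiLp.volume_preserving_toLp ι).integral_comp
    (MeasurableEquiv.toLp 2 _).measurableEmbedding]
  exact integral_fintype_prod_volume_eq_prod f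

end EuclideanProduct

section HermiteSpan

open Function
open scoped ComplexConjugate

variable {n : ℕ}

theorem differentiable_hermiteFun (α : Fin n → ℕ) : Differentiable ℝ (hermiteFun n α) := by
  have hfactor (j : Fin n) : Differentiable ℝ (fun x : En n ↦ (hermite1 (α j) (x j) : ℂ)) :=
    Complex.ofRealCLM.differentiable.comp
      ((differentiable_hermite1 (α j)).comp (EuclideanSpace.proj (𝕜 := ℝ) j).differentiable)
  intro x
  change DifferentiableAt ℝ (fun y : En n ↦ ∏ j, (hermite1 (α j) (y j) : ℂ)) x
  exact (HasFDerivAt.finsetProd fun j _ ↦ (hfactor j x).hasFDerivAt).differentiableAt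

theorem memLp_two_hermiteFun (α : Fin n → ℕ) : MemLp (hermiteFun n α) 2 := by
  have hcont : Continuous (hermiteFun n α) := (differentiable_hermiteFun α).continuous
  rw [memLp_two_iff_integrable_sq_norm hcont.aestronglyMeasurable]
  refine (integrable_euclideanSpace_prod fun j ↦ (memLp_two_hermite1 (α j)).integrable_sq).congr
    (.of_forall fun x ↦ ?_)
  simp only [hermiteFun, norm_prod, Complex.norm_real, Finset.prod_pow, Real.norm_eq_abs,
    ← Finset.abs_prod, sq_abs]

theorem integral_hermiteFun_mul_conj (α β : Fin n → ℕ) :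
    ∫ x, hermiteFun n α x * conj (hermiteFun n β x) = if α = β then 1 else 0 := by
  simp only [hermiteFun, map_prod, Complex.conj_ofReal, ← Finset.prod_mul_distrib,
    ← Complex.ofReal_mul]
  rw [integral_euclideanSpace_prod (f := fun j t ↦ ((hermite1 (α j) t * hermite1 (β j) t : ℝ) : ℂ))]
  simp only [integral_complex_ofReal, integral_hermite1_mul]
  simp [funext_iff, apply_ite Complex.ofReal, Finset.prod_ite_zero]

theorem integral_norm_sq_linearCombination_smul_hermiteFun (r : (Fin n → ℕ) → ℝ)
    {σ : (Fin n → ℕ) → Fin n → ℕ} (hσ : Set.InjOn σ (support r)) (c : (Fin n → ℕ) →₀ ℂ) :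
    ∫ x, ‖Finsupp.linearCombination ℂ (fun α ↦ (r α : ℂ) • hermiteFun n (σ α)) c x‖ ^ 2 =
      c.sum fun α a ↦ ‖a‖ ^ 2 * r α ^ 2 := by
  have hnorm (α : Fin n → ℕ) : ∫ x, ‖hermiteFun n α x‖ ^ 2 = 1 := by
    simpa [Complex.mul_conj', ← Complex.ofReal_pow, integral_complex_ofReal]
      using integral_hermiteFun_mul_conj α α
  rw [integral_norm_sq_linearCombination_of_pairwise_orthogonal
    fun α ↦ (memLp_two_hermiteFun (σ α)).const_smul (r α : ℂ)]
  · simp [mul_pow, integral_const_mul, hnorm]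
  · intro α β hαβ
    have : r α = 0 ∨ r β = 0 ∨ σ α ≠ σ β := by
      by_contra! h
      exact hαβ (hσ h.1 h.2.1 h.2.2)
    have hfactor (x : En n) :
        ((r α : ℂ) • hermiteFun n (σ α)) x * conj (((r β : ℂ) • hermiteFun n (σ β)) x) =
          (r α * r β : ℂ) * (hermiteFun n (σ α) x * conj (hermiteFun n (σ β) x)) := by
      simp only [Pi.smul_apply, smul_eq_mul, map_mul, Complex.conj_ofReal]
      ring
    simp only [hfactor, integral_const_mul, integral_hermiteFun_mul_conj]
    rcases this with h | h | h <;> simp [h]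

/-- The position operator: multiplication by the coordinate `x_j`. -/
def coordMul (j : Fin n) (f : En n → ℂ) : En n → ℂ := fun x ↦ (x j : ℂ) * f x

/-- The annihilation operator `x_j + ∂_j`, which lowers the `j`-th index of a Hermite function;
the customary factor `1/√2` is left out. -/
def annihilation (j : Fin n) (f : En n → ℂ) : En n → ℂ := coordMul j f + pderiv1 j f

/-- The creation operator `x_j - ∂_j`, which raises the `j`-th index of a Hermite function;
the customary factor `1/√2` is left out. -/
def creation (j : Fin n) (f : En n → ℂ) : En n → ℂ := coordMul j f - pderiv1 j f

theorem hermiteFun_eq_mul_prod_erase {α β : Fin n → ℕ} {j : Fin n} (h : ∀ i ≠ j, β i = α i)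
    (x : En n) :
    hermiteFun n β x =
      hermite1 (β j) (x j) * ∏ i ∈ Finset.univ.erase j, (hermite1 (α i) (x i) : ℂ) := by
  rw [hermiteFun, ← Finset.mul_prod_erase _ _ (Finset.mem_univ j)]
  congr 1
  exact Finset.prod_congr rfl fun i hi ↦ by rw [h i (Finset.ne_of_mem_erase hi)]

theorem pderiv1_hermiteFun (j : Fin n) (α : Fin n → ℕ) (x : En n) :
    pderiv1 j (hermiteFun n α) x =
      deriv (hermite1 (α j)) (x j) * ∏ i ∈ Finset.univ.erase j, (hermite1 (α i) (x i) : ℂ) := by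
  have hline (t : ℝ) : hermiteFun n α (x + t • EuclideanSpace.single j (1 : ℝ)) =
      hermite1 (α j) (x j + t) * ∏ i ∈ Finset.univ.erase j, (hermite1 (α i) (x i) : ℂ) := by
    rw [hermiteFun_eq_mul_prod_erase (α := α) (j := j) fun _ _ ↦ rfl]
    congr 1
    · simp
    · exact Finset.prod_congr rfl fun i hi ↦ by simp [Finset.ne_of_mem_erase hi]
  rw [pderiv1, ← (differentiable_hermiteFun α x).lineDeriv_eq_fderiv, lineDeriv, funext hline]
  have hderiv := (differentiable_hermite1 (α j) (x j + 0)).hasDerivAt.comp_const_add (x j) 0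
  simpa using (hderiv.ofReal_comp.mul_const _).deriv

theorem annihilation_hermiteFun (j : Fin n) (α : Fin n → ℕ) :
    annihilation j (hermiteFun n α) = (√(2 * α j) : ℂ) • hermiteFun n (α - Pi.single j 1) := by
  funext x
  rw [annihilation, Pi.add_apply, coordMul, pderiv1_hermiteFun, Pi.smul_apply, smul_eq_mul,
    hermiteFun_eq_mul_prod_erase (α := α) (j := j) fun _ _ ↦ rfl,
    hermiteFun_eq_mul_prod_erase (α := α) (j := j) fun i hi ↦ by simp [hi], ← mul_assoc, ← add_mul,
    ← mul_assoc]
  congr 1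
  exact_mod_cast by simpa using mul_add_deriv_hermite1 (α j) (x j)

theorem creation_hermiteFun (j : Fin n) (α : Fin n → ℕ) :
    creation j (hermiteFun n α) = (√(2 * (α j + 1)) : ℂ) • hermiteFun n (α + Pi.single j 1) := by
  funext x
  rw [creation, Pi.sub_apply, coordMul, pderiv1_hermiteFun, Pi.smul_apply, smul_eq_mul,
    hermiteFun_eq_mul_prod_erase (α := α) (j := j) fun _ _ ↦ rfl,
    hermiteFun_eq_mul_prod_erase (α := α) (j := j) fun i hi ↦ by simp [hi], ← mul_assoc, ← sub_mul,
    ← mul_assoc]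
  congr 1
  exact_mod_cast by simpa using mul_sub_deriv_hermite1 (α j) (x j)

theorem pderiv1_linearCombination {ι : Type*} {v : ι → En n → ℂ}
    (hv : ∀ i, Differentiable ℝ (v i)) (j : Fin n) (c : ι →₀ ℂ) :
    pderiv1 j (Finsupp.linearCombination ℂ v c) =
      Finsupp.linearCombination ℂ (fun i ↦ pderiv1 j (v i)) c := by
  funext x
  have h : HasFDerivAt (∑ i ∈ c.support, c i • v i) (∑ i ∈ c.support, c i • fderiv ℝ (v i) x) x :=
    HasFDerivAt.sum fun i _ ↦ (hv i x).hasFDerivAt.const_smul (c i)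
  simp only [pderiv1, Finsupp.linearCombination_apply, Finsupp.sum, h.fderiv]
  simp [pderiv1]

theorem coordMul_linearCombination {ι : Type*} (v : ι → En n → ℂ) (j : Fin n) (c : ι →₀ ℂ) :
    coordMul j (Finsupp.linearCombination ℂ v c) =
      Finsupp.linearCombination ℂ (fun i ↦ coordMul j (v i)) c := by
  funext x
  simp [coordMul, Finsupp.linearCombination_apply, Finsupp.sum, Finset.mul_sum, mul_left_comm]

theorem annihilation_linearCombination_hermiteFun (j : Fin n) (c : (Fin n → ℕ) →₀ ℂ) :
    annihilation j (Finsupp.linearCombination ℂ (hermiteFun n) c) =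
      Finsupp.linearCombination ℂ
        (fun α ↦ (√(2 * α j) : ℂ) • hermiteFun n (α - Pi.single j 1)) c := by
  rw [annihilation, coordMul_linearCombination, pderiv1_linearCombination differentiable_hermiteFun]
  simp only [Finsupp.linearCombination_apply, Finsupp.sum, ← Finset.sum_add_distrib,
    ← smul_add, ← annihilation_hermiteFun, annihilation]

theorem creation_linearCombination_hermiteFun (j : Fin n) (c : (Fin n → ℕ) →₀ ℂ) :
    creation j (Finsupp.linearCombination ℂ (hermiteFun n) c) =
      Finsupp.linearCombination ℂ
        (fun α ↦ (√(2 * (α j + 1)) : ℂ) • hermiteFun n (α + Pi.single j 1)) c := by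
  rw [creation, coordMul_linearCombination, pderiv1_linearCombination differentiable_hermiteFun]
  simp only [Finsupp.linearCombination_apply, Finsupp.sum, ← Finset.sum_sub_distrib,
    ← smul_sub, ← creation_hermiteFun, creation]

theorem mem_hermiteSpan_iff_linearCombination {N : ℕ} {f : En n → ℂ} :
    f ∈ hermiteSpan n N ↔ ∃ c : (Fin n → ℕ) →₀ ℂ,
      (∀ α ∈ c.support, ∑ j, α j ≤ N) ∧ Finsupp.linearCombination ℂ (hermiteFun n) c = f := by
  have himage : {g | ∃ α : Fin n → ℕ, ∑ j, α j ≤ N ∧ g = hermiteFun n α} =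
      hermiteFun n '' {α | ∑ j, α j ≤ N} := by
    simp only [Set.image, Set.mem_ofPred_eq, eq_comm]
  rw [hermiteSpan, himage, Finsupp.mem_span_image_iff_linearCombination]
  simp only [Finsupp.mem_supported, Set.subset_def, Finset.mem_coe, Set.mem_ofPred_eq]

theorem memLp_two_of_mem_hermiteSpan {N : ℕ} {f : En n → ℂ} (hf : f ∈ hermiteSpan n N) :
    MemLp f 2 := by
  obtain ⟨c, -, rfl⟩ := mem_hermiteSpan_iff_linearCombination.1 hf
  exact memLp_linearCombination memLp_two_hermiteFun c

theorem linearCombination_smul_hermiteFun_mem {M : ℕ} (r : (Fin n → ℕ) → ℂ)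
    {σ : (Fin n → ℕ) → Fin n → ℕ} {c : (Fin n → ℕ) →₀ ℂ}
    (hσ : ∀ α ∈ c.support, ∑ j, σ α j ≤ M) :
    Finsupp.linearCombination ℂ (fun α ↦ r α • hermiteFun n (σ α)) c ∈ hermiteSpan n M :=
  Submodule.sum_mem _ fun α hα ↦ Submodule.smul_mem _ _ <| Submodule.smul_mem _ _ <|
    Submodule.subset_span ⟨σ α, hσ α hα, rfl⟩

theorem annihilation_mem_hermiteSpan {N : ℕ} {f : En n → ℂ} (hf : f ∈ hermiteSpan n N)
    (j : Fin n) : annihilation j f ∈ hermiteSpan n N := by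
  obtain ⟨c, hc, rfl⟩ := mem_hermiteSpan_iff_linearCombination.1 hf
  rw [annihilation_linearCombination_hermiteFun]
  exact linearCombination_smul_hermiteFun_mem _ fun α hα ↦
    (Finset.sum_le_sum fun i _ ↦ tsub_le_self).trans (hc α hα)

theorem creation_mem_hermiteSpan {N : ℕ} {f : En n → ℂ} (hf : f ∈ hermiteSpan n N)
    (j : Fin n) : creation j f ∈ hermiteSpan n (N + 1) := by
  obtain ⟨c, hc, rfl⟩ := mem_hermiteSpan_iff_linearCombination.1 hf
  rw [creation_linearCombination_hermiteFun]
  exact linearCombination_smul_hermiteFun_mem _ fun α hα ↦ by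
    simpa [Finset.sum_add_distrib] using hc α hα

theorem hermiteSpan_mono {N M : ℕ} (h : N ≤ M) : hermiteSpan n N ≤ hermiteSpan n M :=
  Submodule.span_mono fun _ ⟨α, hα, hg⟩ ↦ ⟨α, hα.trans h, hg⟩

theorem coordMul_mem_hermiteSpan {N : ℕ} {f : En n → ℂ} (hf : f ∈ hermiteSpan n N)
    (j : Fin n) : coordMul j f ∈ hermiteSpan n (N + 1) := by
  have h : coordMul j f = (1 / 2 : ℂ) • (annihilation j f + creation j f) := by
    rw [annihilation, creation]
    module
  rw [h]
  exact Submodule.smul_mem _ _ (Submodule.add_mem _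
    (hermiteSpan_mono N.le_succ (annihilation_mem_hermiteSpan hf j))
    (creation_mem_hermiteSpan hf j))

theorem pderiv1_mem_hermiteSpan {N : ℕ} {f : En n → ℂ} (hf : f ∈ hermiteSpan n N)
    (j : Fin n) : pderiv1 j f ∈ hermiteSpan n (N + 1) := by
  have h : pderiv1 j f = (1 / 2 : ℂ) • (annihilation j f - creation j f) := by
    rw [annihilation, creation]
    module
  rw [h]
  exact Submodule.smul_mem _ _ (Submodule.sub_mem _
    (hermiteSpan_mono N.le_succ (annihilation_mem_hermiteSpan hf j))
    (creation_mem_hermiteSpan hf j))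

theorem integral_norm_sq_linearCombination_hermiteFun (c : (Fin n → ℕ) →₀ ℂ) :
    ∫ x, ‖Finsupp.linearCombination ℂ (hermiteFun n) c x‖ ^ 2 = c.sum fun _ a ↦ ‖a‖ ^ 2 := by
  simpa using integral_norm_sq_linearCombination_smul_hermiteFun (fun _ ↦ 1) (Set.injOn_id _) c

theorem integral_norm_sq_annihilation (j : Fin n) (c : (Fin n → ℕ) →₀ ℂ) :
    ∫ x, ‖annihilation j (Finsupp.linearCombination ℂ (hermiteFun n) c) x‖ ^ 2 =
      c.sum fun α a ↦ ‖a‖ ^ 2 * (2 * α j) := by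
  have hinj : Set.InjOn (fun α : Fin n → ℕ ↦ α - Pi.single j 1)
      (support fun α ↦ √(2 * (α j : ℝ))) := by
    have hle {α : Fin n → ℕ} (hα : √(2 * (α j : ℝ)) ≠ 0) : Pi.single j 1 ≤ α := by
      have hαj : α j ≠ 0 := fun h ↦ hα (by simp [h])
      exact update_le_iff.2 ⟨Nat.one_le_iff_ne_zero.2 hαj, fun _ _ ↦ Nat.zero_le _⟩
    exact fun α hα β hβ h ↦ (tsub_left_inj (hle hα) (hle hβ)).1 h
  rw [annihilation_linearCombination_hermiteFun,
    integral_norm_sq_linearCombination_smul_hermiteFun _ hinj]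
  exact Finsupp.sum_congr fun α _ ↦ by rw [Real.sq_sqrt (by positivity)]

theorem integral_norm_sq_creation (j : Fin n) (c : (Fin n → ℕ) →₀ ℂ) :
    ∫ x, ‖creation j (Finsupp.linearCombination ℂ (hermiteFun n) c) x‖ ^ 2 =
      c.sum fun α a ↦ ‖a‖ ^ 2 * (2 * (α j + 1)) := by
  rw [creation_linearCombination_hermiteFun, integral_norm_sq_linearCombination_smul_hermiteFun _
    (add_left_injective (Pi.single j 1)).injOn]
  exact Finsupp.sum_congr fun α _ ↦ by rw [Real.sq_sqrt (by positivity)]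

theorem integral_norm_sq_coordMul_add_integral_norm_sq_pderiv1_eq {N : ℕ} {f : En n → ℂ}
    (hf : f ∈ hermiteSpan n N) (j : Fin n) :
    (∫ x, ‖coordMul j f x‖ ^ 2) + ∫ x, ‖pderiv1 j f x‖ ^ 2 =
      ((∫ x, ‖annihilation j f x‖ ^ 2) + ∫ x, ‖creation j f x‖ ^ 2) / 2 := by
  have hint {M : ℕ} {g : En n → ℂ} (hg : g ∈ hermiteSpan n M) : Integrable (fun x ↦ ‖g x‖ ^ 2) :=
    (memLp_two_of_mem_hermiteSpan hg).integrable_norm_pow two_ne_zero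
  rw [← integral_add (hint (coordMul_mem_hermiteSpan hf j)) (hint (pderiv1_mem_hermiteSpan hf j)),
    ← integral_add (hint (annihilation_mem_hermiteSpan hf j))
      (hint (creation_mem_hermiteSpan hf j)),
    ← integral_div]
  congr with x
  have h := parallelogram_law_with_norm ℝ (coordMul j f x) (pderiv1 j f x)
  simp only [annihilation, creation, Pi.add_apply, Pi.sub_apply]
  linarith

theorem integral_norm_sq_coordMul_add_integral_norm_sq_pderiv1_le {N : ℕ} {f : En n → ℂ}
    (hf : f ∈ hermiteSpan n N) (j : Fin n) :
    (∫ x, ‖coordMul j f x‖ ^ 2) + ∫ x, ‖pderiv1 j f x‖ ^ 2 ≤ (2 * N + 1) * ∫ x, ‖f x‖ ^ 2 := by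
  rw [integral_norm_sq_coordMul_add_integral_norm_sq_pderiv1_eq hf]
  obtain ⟨c, hc, rfl⟩ := mem_hermiteSpan_iff_linearCombination.1 hf
  rw [integral_norm_sq_annihilation, integral_norm_sq_creation,
    integral_norm_sq_linearCombination_hermiteFun]
  simp only [Finsupp.sum]
  rw [← Finset.sum_add_distrib, Finset.sum_div, Finset.mul_sum]
  refine Finset.sum_le_sum fun α hα ↦ ?_
  have hαj : (α j : ℝ) ≤ N := by
    exact_mod_cast (Finset.single_le_sum_of_canonicallyOrdered (Finset.mem_univ j)).trans (hc α hα)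
  nlinarith [sq_nonneg ‖c α‖]

/-- The constant `√(2ᵏ (N+1)⋯(N+k))`, the product over `i = 1, …, k` of the bounds `√(2(N+i))` for
the `L²` operator norms of `x_j` and `∂_j` from `E_{N+i-1}` to `E_{N+i}`. -/
def hermiteGrowth (N k : ℕ) : ℝ := √(2 ^ k * (N + 1).ascFactorial k)

theorem hermiteGrowth_add (N k l : ℕ) :
    hermiteGrowth N (k + l) = hermiteGrowth (N + k) l * hermiteGrowth N k := by
  rw [hermiteGrowth, hermiteGrowth, hermiteGrowth, ← Real.sqrt_mul (by positivity),
    ← Nat.ascFactorial_mul_ascFactorial, add_right_comm]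
  push_cast
  ring_nf

theorem hermiteGrowth_eq (N k : ℕ) :
    hermiteGrowth N k = (2 : ℝ) ^ ((k : ℝ) / 2) * √((N + k).factorial / N.factorial) := by
  rw [hermiteGrowth, Real.sqrt_mul (by positivity), Real.sqrt_eq_rpow, ← Real.rpow_natCast,
    ← Real.rpow_mul zero_le_two, mul_one_div, ← Nat.factorial_mul_ascFactorial, Nat.cast_mul,
    mul_div_cancel_left₀ _ (by positivity)]

/-- `T` raises the Hermite degree by at most `k`, with the same `L²` bound on each `E_N` as a
product of `k` operators `x_j`, `∂_j`. `T` is a plain function, as only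
compositions are formed. -/
def HasHermiteOrder (T : (En n → ℂ) → En n → ℂ) (k : ℕ) : Prop :=
  ∀ ⦃N : ℕ⦄ ⦃f : En n → ℂ⦄, f ∈ hermiteSpan n N →
    T f ∈ hermiteSpan n (N + k) ∧ L2norm n (T f) ≤ hermiteGrowth N k * L2norm n f

theorem hasHermiteOrder_id : HasHermiteOrder (id : (En n → ℂ) → En n → ℂ) 0 :=
  fun N f hf ↦ ⟨hf, by simp [hermiteGrowth]⟩

theorem hasHermiteOrder_one {T : (En n → ℂ) → En n → ℂ}
    (hmem : ∀ {N f}, f ∈ hermiteSpan n N → T f ∈ hermiteSpan n (N + 1))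
    (hle : ∀ {N f}, f ∈ hermiteSpan n N → ∫ x, ‖T f x‖ ^ 2 ≤ 2 * (N + 1) * ∫ x, ‖f x‖ ^ 2) :
    HasHermiteOrder T 1 := by
  intro N f hf
  refine ⟨hmem hf, ?_⟩
  rw [L2norm, L2norm, hermiteGrowth, ← Real.sqrt_mul (by positivity)]
  exact Real.sqrt_le_sqrt (by simpa [Nat.ascFactorial_succ] using hle hf)

theorem hasHermiteOrder_coordMul (j : Fin n) : HasHermiteOrder (coordMul j) 1 := by
  refine hasHermiteOrder_one (coordMul_mem_hermiteSpan · j) fun {N f} hf ↦ ?_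
  have hpderiv : 0 ≤ ∫ x, ‖pderiv1 j f x‖ ^ 2 := by positivity
  have hf_nonneg : 0 ≤ ∫ x, ‖f x‖ ^ 2 := by positivity
  linarith [integral_norm_sq_coordMul_add_integral_norm_sq_pderiv1_le hf j]

theorem hasHermiteOrder_pderiv1 (j : Fin n) : HasHermiteOrder (pderiv1 j) 1 := by
  refine hasHermiteOrder_one (pderiv1_mem_hermiteSpan · j) fun {N f} hf ↦ ?_
  have hcoord : 0 ≤ ∫ x, ‖coordMul j f x‖ ^ 2 := by positivity
  have hf_nonneg : 0 ≤ ∫ x, ‖f x‖ ^ 2 := by positivity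
  linarith [integral_norm_sq_coordMul_add_integral_norm_sq_pderiv1_le hf j]

namespace HasHermiteOrder

variable {S T : (En n → ℂ) → En n → ℂ} {k l : ℕ}

theorem comp (hS : HasHermiteOrder S l) (hT : HasHermiteOrder T k) :
    HasHermiteOrder (S ∘ T) (k + l) := by
  intro N f hf
  obtain ⟨hTmem, hTle⟩ := hT hf
  obtain ⟨hSmem, hSle⟩ := hS hTmem
  refine ⟨add_assoc N k l ▸ hSmem, ?_⟩
  calc L2norm n (S (T f)) ≤ hermiteGrowth (N + k) l * L2norm n (T f) := hSle
    _ ≤ hermiteGrowth (N + k) l * (hermiteGrowth N k * L2norm n f) := by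
      gcongr
      exact Real.sqrt_nonneg _
    _ = hermiteGrowth N (k + l) * L2norm n f := by rw [hermiteGrowth_add, mul_assoc]

theorem iterate (hT : HasHermiteOrder T k) (m : ℕ) : HasHermiteOrder (T^[m]) (k * m) := by
  induction m with
  | zero => exact hasHermiteOrder_id
  | succ m ih => exact iterate_succ' T m ▸ hT.comp ih

theorem foldr {T : Fin n → (En n → ℂ) → En n → ℂ} (hT : ∀ j, HasHermiteOrder (T j) k)
    (β : Fin n → ℕ) (l : List (Fin n)) :
    HasHermiteOrder (fun f ↦ l.foldr (fun j g ↦ (T j)^[β j] g) f) (k * (l.map β).sum) := by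
  induction l with
  | nil => exact hasHermiteOrder_id
  | cons j l ih =>
    rw [List.map_cons, List.sum_cons, add_comm, mul_add]
    exact ((hT j).iterate (β j)).comp ih

end HasHermiteOrder

theorem hasHermiteOrder_pderivMulti (β : Fin n → ℕ) :
    HasHermiteOrder (pderivMulti β) (∑ j, β j) := by
  rw [Fin.sum_univ_def, ← one_mul (List.sum _)]
  exact HasHermiteOrder.foldr hasHermiteOrder_pderiv1 β (List.finRange n)

theorem iterate_coordMul_apply (j : Fin n) (m : ℕ) (f : En n → ℂ) (x : En n) :
    (coordMul j)^[m] f x = (x j : ℂ) ^ m * f x := by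
  induction m with
  | zero => simp
  | succ m ih => rw [iterate_succ_apply', coordMul, ih, pow_succ', mul_assoc]

theorem foldr_iterate_coordMul_apply (α : Fin n → ℕ) (l : List (Fin n)) (f : En n → ℂ)
    (x : En n) :
    l.foldr (fun j g ↦ (coordMul j)^[α j] g) f x = (l.map fun j ↦ (x j : ℂ) ^ α j).prod * f x := by
  induction l with
  | nil => simp
  | cons j l ih =>
    rw [List.foldr_cons, iterate_coordMul_apply, ih, List.map_cons, List.prod_cons, mul_assoc]

theorem hasHermiteOrder_monomial_mul (α : Fin n → ℕ) :
    HasHermiteOrder (fun f x ↦ (monomial n α x : ℂ) * f x) (∑ j, α j) := by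
  have h : (fun f x ↦ (monomial n α x : ℂ) * f x) =
      fun f ↦ (List.finRange n).foldr (fun j g ↦ (coordMul j)^[α j] g) f := by
    funext f x
    rw [foldr_iterate_coordMul_apply, ← Fin.prod_univ_def, monomial]
    push_cast
    rfl
  rw [h, Fin.sum_univ_def, ← one_mul (List.sum _)]
  exact HasHermiteOrder.foldr hasHermiteOrder_coordMul α (List.finRange n)

end HermiteSpan

/-- **Estimate (gh0)**: for f ∈ E_N,
‖x^α ∂^β f‖ ≤ 2^{(|α|+|β|)/2} √((N+|α|+|β|)!/N!) ‖f‖. -/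
theorem hermite_span_monomial_deriv_estimate
    (n N : ℕ) (f : En n → ℂ) (hf : f ∈ hermiteSpan n N) (α β : Fin n → ℕ) :
    L2norm n (fun x => (monomial n α x : ℂ) * pderivMulti β f x) ≤
      (2 : ℝ) ^ (((((∑ j, α j) + (∑ j, β j) : ℕ)) : ℝ) / 2) *
        Real.sqrt (((N + (∑ j, α j) + (∑ j, β j)).factorial : ℝ) / (N.factorial : ℝ)) *
        L2norm n f := by
  have h := ((hasHermiteOrder_monomial_mul α).comp (hasHermiteOrder_pderivMulti β) hf).2
  rwa [add_comm (∑ j, β j), hermiteGrowth_eq, ← add_assoc] at h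

end
end

section
/- For every r > 0 and all real numbers x, y ≥ r, one has Γ(x)Γ(y) ≤ (1/(2r)) B(r,r) Γ(x+y+1). -/
noncomputable section

/-- The real Beta function B(x,y) = ∫₀¹ t^{x-1}(1-t)^{y-1} dt. -/
def realBeta (x y : ℝ) : ℝ := ∫ t in (0:ℝ)..1, t ^ (x - 1) * (1 - t) ^ (y - 1)

/-!
Since `t` and `1 - t` lie in `[0, 1]`, the Beta integrand decreases in both exponents, so
`Γ(x) Γ(y) = B(x, y) Γ(x + y) ≤ B(a, b) Γ(x + y)` for `x ≥ a` and `y ≥ b`. The factor `1 / (a + b)`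
comes from `Γ(x + y + 1) = (x + y) Γ(x + y)` and `x + y ≥ a + b`.
-/

open Set MeasureTheory

theorem ofReal_rpow_mul_one_sub_rpow {t : ℝ} (ht : t ∈ Icc (0 : ℝ) 1) (x y : ℝ) :
    ((t ^ (x - 1) * (1 - t) ^ (y - 1) : ℝ) : ℂ) =
      (t : ℂ) ^ ((x : ℂ) - 1) * (1 - (t : ℂ)) ^ ((y : ℂ) - 1) := by
  rw [Complex.ofReal_mul, Complex.ofReal_cpow ht.1, Complex.ofReal_cpow (sub_nonneg.2 ht.2)]
  push_cast
  rfl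

theorem betaIntegral_ofReal (x y : ℝ) : Complex.betaIntegral x y = realBeta x y := by
  rw [Complex.betaIntegral, realBeta, ← intervalIntegral.integral_ofReal]
  refine intervalIntegral.integral_congr fun t ht ↦ ?_
  rw [uIcc_of_le zero_le_one] at ht
  exact (ofReal_rpow_mul_one_sub_rpow ht x y).symm

theorem intervalIntegrable_rpow_mul_one_sub_rpow {x y : ℝ} (hx : 0 < x) (hy : 0 < y) :
    IntervalIntegrable (fun t : ℝ ↦ t ^ (x - 1) * (1 - t) ^ (y - 1)) volume 0 1 := by
  have hcomplex := Complex.betaIntegral_convergent (u := x) (v := y) (by simpa) (by simpa)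
  rw [intervalIntegrable_iff_integrableOn_Ioc_of_le zero_le_one] at hcomplex ⊢
  exact IntegrableOn.congr_fun (Integrable.re hcomplex)
    (fun t ht ↦ by simp [← ofReal_rpow_mul_one_sub_rpow (Ioc_subset_Icc_self ht)])
    measurableSet_Ioc

theorem realBeta_nonneg (x y : ℝ) : 0 ≤ realBeta x y :=
  intervalIntegral.integral_nonneg zero_le_one fun _ ht ↦
    mul_nonneg (Real.rpow_nonneg ht.1 _) (Real.rpow_nonneg (sub_nonneg.2 ht.2) _)

theorem realBeta_le_realBeta {a b x y : ℝ} (ha : 0 < a) (hb : 0 < b) (hx : a ≤ x) (hy : b ≤ y) :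
    realBeta x y ≤ realBeta a b := by
  refine intervalIntegral.integral_mono_on_of_le_Ioo zero_le_one
    (intervalIntegrable_rpow_mul_one_sub_rpow (ha.trans_le hx) (hb.trans_le hy))
    (intervalIntegrable_rpow_mul_one_sub_rpow ha hb) fun t ⟨ht0, ht1⟩ ↦ ?_
  have hs : 0 < 1 - t := sub_pos.2 ht1
  have h_left : t ^ (x - 1) ≤ t ^ (a - 1) :=
    Real.rpow_le_rpow_of_exponent_ge ht0 ht1.le (by gcongr)
  have h_right : (1 - t) ^ (y - 1) ≤ (1 - t) ^ (b - 1) :=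
    Real.rpow_le_rpow_of_exponent_ge hs (by linarith) (by gcongr)
  gcongr

theorem gamma_mul_gamma_eq_realBeta_mul_gamma {x y : ℝ} (hx : 0 < x) (hy : 0 < y) :
    Real.Gamma x * Real.Gamma y = realBeta x y * Real.Gamma (x + y) := by
  have hcomplex := Complex.Gamma_mul_Gamma_eq_betaIntegral (s := x) (t := y) (by simpa) (by simpa)
  rw [betaIntegral_ofReal, ← Complex.ofReal_add] at hcomplex
  simp only [Complex.Gamma_ofReal] at hcomplex
  rw [mul_comm (realBeta x y)]
  exact_mod_cast hcomplex

theorem gamma_mul_gamma_le_general {a b x y : ℝ} (ha : 0 < a) (hb : 0 < b)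
    (hx : a ≤ x) (hy : b ≤ y) :
    Real.Gamma x * Real.Gamma y ≤ 1 / (a + b) * realBeta a b * Real.Gamma (x + y + 1) := by
  have hx0 : 0 < x := ha.trans_le hx
  have hy0 : 0 < y := hb.trans_le hy
  have hΓ : 0 ≤ Real.Gamma (x + y) := Real.Gamma_nonneg_of_nonneg (by positivity)
  have hratio : 1 ≤ (x + y) / (a + b) := (one_le_div (by positivity)).2 (by gcongr)
  calc Real.Gamma x * Real.Gamma y
      = realBeta x y * Real.Gamma (x + y) := gamma_mul_gamma_eq_realBeta_mul_gamma hx0 hy0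
    _ ≤ realBeta a b * Real.Gamma (x + y) := by
        gcongr
        exact realBeta_le_realBeta ha hb hx hy
    _ ≤ (x + y) / (a + b) * (realBeta a b * Real.Gamma (x + y)) :=
        le_mul_of_one_le_left (mul_nonneg (realBeta_nonneg a b) hΓ) hratio
    _ = 1 / (a + b) * realBeta a b * Real.Gamma (x + y + 1) := by
        rw [Real.Gamma_add_one (by positivity)]
        ring

/-- **Lemma "gamma3" (ii)**: Γ(x)Γ(y) ≤ (1/(2r)) B(r,r) Γ(x+y+1) for x, y ≥ r > 0. -/
theorem gamma_mul_gamma_le (r x y : ℝ) (hr : 0 < r) (hx : r ≤ x) (hy : r ≤ y) :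
    Real.Gamma x * Real.Gamma y ≤
      1 / (2 * r) * realBeta r r * Real.Gamma (x + y + 1) := by
  rw [two_mul]
  exact gamma_mul_gamma_le_general hr hr hx hy

end
end

section
/- For every real r ≥ 1 there exists a constant C_r > 0 such that for all real x ≥ 1, Γ(x)^r ≤ C_r Γ(rx). -/
noncomputable section

/-!
Since `log ∘ Γ` is convex, its slope over `[r * x, r * y]` is at least its slope over `[x, y]`
when `1 ≤ r`. Hence `log Γ(r * x) - r * log Γ(x)` increases with `x > 0`, and so does
`Γ(r * x) / Γ(x) ^ r`. On `[a, ∞)` this quotient is least at `a`, which makes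
`Γ(a) ^ r / Γ(r * a)` the best constant there, for instance `1 / Γ(r)` on `[1, ∞)`.
-/

section ConvexOn

variable {𝕜 : Type*} [Field 𝕜] [LinearOrder 𝕜] [IsStrictOrderedRing 𝕜] {s : Set 𝕜} {f : 𝕜 → 𝕜}

theorem slope_le_slope_of_convexOn (hf : ConvexOn 𝕜 s f) {a b c d : 𝕜} (ha : a ∈ s) (hd : d ∈ s)
    (hab : a < b) (hcd : c < d) (hac : a ≤ c) (hbd : b ≤ d) : slope f a b ≤ slope f c d := by
  have had : a < d := hab.trans_le hbd
  have hb : b ∈ s := hf.1.ordConnected.out ha hd ⟨hab.le, hbd⟩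
  have hc : c ∈ s := hf.1.ordConnected.out ha hd ⟨hac, hcd.le⟩
  calc slope f a b ≤ slope f a d := hf.slope_mono ha ⟨hb, hab.ne'⟩ ⟨hd, had.ne'⟩ hbd
    _ = slope f d a := slope_comm f a d
    _ ≤ slope f d c := hf.slope_mono hd ⟨ha, had.ne⟩ ⟨hc, hcd.ne⟩ hac
    _ = slope f c d := slope_comm f d c

theorem mul_sub_le_sub_mul_of_convexOn (hf : ConvexOn 𝕜 s f) {r x y : 𝕜} (hr : 1 ≤ r)
    (hx : x ∈ s) (hry : r * y ∈ s) (hx₀ : 0 ≤ x) (hxy : x ≤ y) :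
    r * (f y - f x) ≤ f (r * y) - f (r * x) := by
  obtain rfl | hlt := hxy.eq_or_lt
  · simp
  have hr₀ : 0 < r := one_pos.trans_le hr
  have hslope : slope f x y ≤ slope f (r * x) (r * y) :=
    slope_le_slope_of_convexOn hf hx hry hlt (mul_lt_mul_of_pos_left hlt hr₀)
      (le_mul_of_one_le_left hx₀ hr) (le_mul_of_one_le_left (hx₀.trans hxy) hr)
  rwa [slope_def_field, slope_def_field, ← mul_sub, ← div_div, div_le_div_iff_of_pos_right
    (sub_pos.2 hlt), le_div_iff₀' hr₀] at hslope

end ConvexOn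

theorem monotoneOn_gamma_mul_div_gamma_rpow {r : ℝ} (hr : 1 ≤ r) :
    MonotoneOn (fun x ↦ Real.Gamma (r * x) / Real.Gamma x ^ r) (Set.Ioi 0) := by
  intro x (hx : 0 < x) y (hy : 0 < y) hxy
  have hr₀ : 0 < r := one_pos.trans_le hr
  have hΓ {z : ℝ} (hz : 0 < z) : 0 < Real.Gamma z := Real.Gamma_pos_of_pos hz
  have hquot {z : ℝ} (hz : 0 < z) : 0 < Real.Gamma (r * z) / Real.Gamma z ^ r :=
    div_pos (hΓ (mul_pos hr₀ hz)) (Real.rpow_pos_of_pos (hΓ hz) r)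
  have hlog {z : ℝ} (hz : 0 < z) : Real.log (Real.Gamma (r * z) / Real.Gamma z ^ r) =
      Real.log (Real.Gamma (r * z)) - r * Real.log (Real.Gamma z) := by
    rw [Real.log_div (hΓ (mul_pos hr₀ hz)).ne' (Real.rpow_pos_of_pos (hΓ hz) r).ne',
      Real.log_rpow (hΓ hz)]
  have hconvex : r * (Real.log (Real.Gamma y) - Real.log (Real.Gamma x)) ≤
      Real.log (Real.Gamma (r * y)) - Real.log (Real.Gamma (r * x)) :=
    mul_sub_le_sub_mul_of_convexOn Real.convexOn_log_Gamma hr hx (mul_pos hr₀ hy) hx.le hxy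
  rw [← Real.log_le_log_iff (hquot hx) (hquot hy), hlog hx, hlog hy]
  linarith

theorem gamma_pow_le_general {r a : ℝ} (hr : 1 ≤ r) (ha : 0 < a) :
    ∃ C : ℝ, 0 < C ∧ ∀ x : ℝ, a ≤ x →
      Real.Gamma x ^ r ≤ C * Real.Gamma (r * x) := by
  have hquot : 0 < Real.Gamma (r * a) / Real.Gamma a ^ r :=
    div_pos (Real.Gamma_pos_of_pos (mul_pos (one_pos.trans_le hr) ha))
      (Real.rpow_pos_of_pos (Real.Gamma_pos_of_pos ha) r)
  refine ⟨(Real.Gamma (r * a) / Real.Gamma a ^ r)⁻¹, inv_pos.2 hquot, fun x hax ↦ ?_⟩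
  have hx : 0 < x := ha.trans_le hax
  have hmono : Real.Gamma (r * a) / Real.Gamma a ^ r ≤ Real.Gamma (r * x) / Real.Gamma x ^ r :=
    monotoneOn_gamma_mul_div_gamma_rpow hr ha hx hax
  rwa [le_inv_mul_iff₀ hquot,
    ← le_div_iff₀ (Real.rpow_pos_of_pos (Real.Gamma_pos_of_pos hx) r)]

/-- **Lemma "gamma3" (iii)**: for r ≥ 1 there is C_r > 0 with Γ(x)^r ≤ C_r Γ(rx) for x ≥ 1. -/
theorem gamma_pow_le (r : ℝ) (hr : 1 ≤ r) :
    ∃ C : ℝ, 0 < C ∧ ∀ x : ℝ, 1 ≤ x →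
      Real.Gamma x ^ r ≤ C * Real.Gamma (r * x) :=
  gamma_pow_le_general hr one_pos

end
end

section
/- Let ρ_1, ρ_2 : ℝ^n → (0,∞) be continuous positive functions with ρ_1(x) ≤ ρ_2(x) for all x ∈ ℝ^n. If ω ⊂ ℝ^n is a measurable subset which is γ-thick with respect to the density ρ_1 for some γ with 1 − 6^{−n} < γ ≤ 1, then ω is γ̃-thick with respect to the density ρ_2, where γ̃ = 1 − (1−γ)6^n > 0; that is, |ω ∩ B(x, ρ_2(x))| ≥ (1 − (1−γ)6^n) |B(x, ρ_2(x))| for every x ∈ ℝ^n. -/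
/-!
Let `d` be the dimension and suppose that a measure `ν` satisfies `ν B ≤ ε μ B` on each ball
`B = B(y, ρ y)`, with `ρ` continuous; then `ν B ≤ 6 ^ d ε μ B` for `B = B(x, R)` as soon as
`ρ x ≤ R`. If `ρ` exceeds `2R` somewhere on `B(x, R)`, then by the intermediate value theorem
`ρ z = 2R` for some `z ∈ B(x, R)`, and `B(x, R) ⊆ B(z, 2R)` costs only a factor `2 ^ d`.
Otherwise Vitali's lemma gives disjoint balls `B(b, ρ b / 3) ⊆ B(x, 2R)` such that the balls
`B(b, ρ b)` cover `B(x, R)`, which costs a factor `3 ^ d` for the covering and `2 ^ d` for the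
enlargement of `B(x, R)`. Thickness is the case in which `ν` is `μ` restricted to the complement
of `ω`.
-/

open MeasureTheory
open scoped BigOperators ENNReal NNReal

noncomputable section

/-- γ-thickness with respect to a density ρ. -/
def ThickWith (n : ℕ) (γ : ℝ) (ρ : En n → ℝ) (ω : Set (En n)) : Prop :=
  ∀ x : En n,
    ENNReal.ofReal γ * volume (Metric.ball x (ρ x)) ≤ volume (ω ∩ Metric.ball x (ρ x))

section MetricSpace

open Metric

variable {X : Type*} [PseudoMetricSpace X] {ρ : X → ℝ} {s t : Set X}

theorem exists_pairwiseDisjoint_ball_div_three_covering {M : ℝ} (hpos : ∀ y ∈ s, 0 < ρ y)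
    (hM : ∀ y ∈ s, ρ y ≤ M) :
    ∃ u ⊆ s, u.PairwiseDisjoint (fun y ↦ ball y (ρ y / 3)) ∧ s ⊆ ⋃ y ∈ u, ball y (ρ y) := by
  obtain ⟨u, hus, hdisj, hmeet⟩ := Vitali.exists_disjoint_subfamily_covering_enlargement
    (fun y ↦ ball y (ρ y / 3)) s ρ 2 one_lt_two (fun y hy ↦ (hpos y hy).le) M hM
    (fun y hy ↦ nonempty_ball.2 (div_pos (hpos y hy) three_pos))
  refine ⟨u, hus, hdisj, fun y hy ↦ Set.mem_iUnion₂.2 ?_⟩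
  obtain ⟨b, hb, ⟨w, hwy, hwb⟩, hyb⟩ := hmeet y hy
  refine ⟨b, hb, ?_⟩
  rw [mem_ball] at hwy hwb ⊢
  calc dist y b ≤ dist w y + dist w b := dist_triangle_left y b w
    _ < ρ y / 3 + ρ b / 3 := add_lt_add hwy hwb
    _ ≤ ρ b := by linarith

theorem measure_le_mul_of_forall_ball_div_three_subset [SecondCountableTopology X]
    [MeasurableSpace X] [OpensMeasurableSpace X] {μ ν : Measure X} {ε : ℝ≥0∞} {M : ℝ}
    (hpos : ∀ y ∈ s, 0 < ρ y) (hM : ∀ y ∈ s, ρ y ≤ M) (ht : ∀ y ∈ s, ball y (ρ y / 3) ⊆ t)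
    (hν : ∀ y ∈ s, ν (ball y (ρ y)) ≤ ε * μ (ball y (ρ y / 3))) :
    ν s ≤ ε * μ t := by
  obtain ⟨u, hus, hdisj, hcover⟩ := exists_pairwiseDisjoint_ball_div_three_covering hpos hM
  have hcount : u.Countable := hdisj.countable_of_isOpen (fun _ _ ↦ isOpen_ball)
    fun y hy ↦ nonempty_ball.2 (div_pos (hpos y (hus hy)) three_pos)
  calc ν s ≤ ν (⋃ y ∈ u, ball y (ρ y)) := measure_mono hcover
    _ ≤ ∑' y : u, ν (ball (y : X) (ρ y)) := measure_biUnion_le ν hcount _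
    _ ≤ ∑' y : u, ε * μ (ball (y : X) (ρ y / 3)) :=
      ENNReal.tsum_le_tsum fun y ↦ hν y (hus y.2)
    _ = ε * μ (⋃ y ∈ u, ball y (ρ y / 3)) := by
      rw [ENNReal.tsum_mul_left, measure_biUnion hcount hdisj fun _ _ ↦ measurableSet_ball]
    _ ≤ ε * μ t := by
      gcongr
      exact Set.iUnion₂_subset fun y hy ↦ ht y (hus hy)

end MetricSpace

section AddHaar

open Metric Module

variable {E : Type*} [NormedAddCommGroup E] [NormedSpace ℝ E] {ρ : E → ℝ} {x : E} {R : ℝ}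

theorem forall_mem_ball_le_or_exists_eq {c : ℝ} (hρ : ContinuousOn ρ (ball x R)) (hR : 0 < R)
    (hx : ρ x ≤ c) : (∀ y ∈ ball x R, ρ y ≤ c) ∨ ∃ z ∈ ball x R, ρ z = c := by
  refine or_iff_not_imp_left.2 fun hlarge ↦ ?_
  push Not at hlarge
  obtain ⟨y, hy, hcy⟩ := hlarge
  exact (convex_ball x R).isPreconnected.intermediate_value (mem_ball_self hR) hy hρ ⟨hx, hcy.le⟩

variable [FiniteDimensional ℝ E] [MeasurableSpace E] [BorelSpace E]
  {μ ν : Measure E} [μ.IsAddHaarMeasure] {ε : ℝ≥0∞}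

theorem addHaar_ball_mul_eq_mul_addHaar_ball (x y : E) {c : ℝ} (hc : 0 < c) (r : ℝ) :
    μ (ball x (c * r)) = ENNReal.ofReal c ^ finrank ℝ E * μ (ball y r) := by
  rw [Measure.addHaar_ball_mul_of_pos μ x hc, Measure.addHaar_ball_center μ y,
    ENNReal.ofReal_pow hc.le]

theorem measure_ball_le_of_forall_mem_ball_le_two_mul (hpos : ∀ y ∈ ball x R, 0 < ρ y)
    (hρ : ∀ y ∈ ball x R, ρ y ≤ 2 * R)
    (hν : ∀ y ∈ ball x R, ν (ball y (ρ y)) ≤ ε * μ (ball y (ρ y))) :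
    ν (ball x R) ≤ ε * (6 ^ finrank ℝ E * μ (ball x R)) := by
  have hsub : ∀ y ∈ ball x R, ball y (ρ y / 3) ⊆ ball x (2 * R) := fun y hy ↦
    ball_subset_ball' (by linarith [hρ y hy, mem_ball.1 hy, dist_nonneg (x := y) (y := x)])
  have hthird : ∀ y ∈ ball x R,
      ν (ball y (ρ y)) ≤ ε * 3 ^ finrank ℝ E * μ (ball y (ρ y / 3)) := fun y hy ↦ by
    have hscale := addHaar_ball_mul_eq_mul_addHaar_ball (μ := μ) y y three_pos (ρ y / 3)
    rw [mul_div_cancel₀ _ three_ne_zero, ENNReal.ofReal_ofNat] at hscale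
    rw [mul_assoc, ← hscale]
    exact hν y hy
  calc ν (ball x R) ≤ ε * 3 ^ finrank ℝ E * μ (ball x (2 * R)) :=
      measure_le_mul_of_forall_ball_div_three_subset hpos hρ hsub hthird
    _ = ε * (6 ^ finrank ℝ E * μ (ball x R)) := by
      rw [addHaar_ball_mul_eq_mul_addHaar_ball x x two_pos, ENNReal.ofReal_ofNat, mul_assoc,
        ← mul_assoc (3 ^ _), ← mul_pow]
      norm_num

theorem measure_ball_le_of_mem_ball_of_eq_two_mul {z : E} (hz : z ∈ ball x R)
    (hzR : ρ z = 2 * R) (hν : ν (ball z (ρ z)) ≤ ε * μ (ball z (ρ z))) :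
    ν (ball x R) ≤ ε * (2 ^ finrank ℝ E * μ (ball x R)) := by
  rw [hzR] at hν
  calc ν (ball x R) ≤ ν (ball z (2 * R)) :=
      measure_mono (ball_subset_ball' (by linarith [mem_ball'.1 hz]))
    _ ≤ ε * μ (ball z (2 * R)) := hν
    _ = ε * (2 ^ finrank ℝ E * μ (ball x R)) := by
      rw [addHaar_ball_mul_eq_mul_addHaar_ball z x two_pos, ENNReal.ofReal_ofNat]

theorem measure_ball_le_of_forall_measure_ball_le (hρ : Continuous ρ) (hpos : ∀ y, 0 < ρ y)
    (hν : ∀ y, ν (ball y (ρ y)) ≤ ε * μ (ball y (ρ y))) (hx : ρ x ≤ R) :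
    ν (ball x R) ≤ ε * (6 ^ finrank ℝ E * μ (ball x R)) := by
  have hR : 0 < R := (hpos x).trans_le hx
  obtain hsmall | ⟨z, hz, hzR⟩ :=
    forall_mem_ball_le_or_exists_eq (c := 2 * R) hρ.continuousOn hR (by linarith)
  · exact measure_ball_le_of_forall_mem_ball_le_two_mul (fun y _ ↦ hpos y) hsmall fun y _ ↦ hν y
  · refine (measure_ball_le_of_mem_ball_of_eq_two_mul hz hzR (hν z)).trans ?_
    gcongr
    norm_num

end AddHaar

theorem ofReal_mul_measure_le_measure_inter_iff {α : Type*} [MeasurableSpace α] {μ : Measure α}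
    {s t : Set α} {γ : ℝ} (hs : MeasurableSet s) (ht : μ t ≠ ∞) (hγ : γ ≤ 1) :
    ENNReal.ofReal γ * μ t ≤ μ (s ∩ t) ↔ μ (t \ s) ≤ ENNReal.ofReal (1 - γ) * μ t := by
  obtain hγ0 | hγ0 := le_total γ 0
  · have hone : 1 ≤ ENNReal.ofReal (1 - γ) := ENNReal.one_le_ofReal.2 (by linarith)
    have hsdiff : μ (t \ s) ≤ ENNReal.ofReal (1 - γ) * μ t :=
      (measure_mono Set.sdiff_subset).trans (le_mul_of_one_le_left' hone)
    simp [ENNReal.ofReal_of_nonpos hγ0, hsdiff]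
  · have hsplit : μ (s ∩ t) + μ (t \ s) =
        ENNReal.ofReal γ * μ t + ENNReal.ofReal (1 - γ) * μ t := by
      rw [Set.inter_comm, measure_inter_add_sdiff t hs, ← add_mul,
        ← ENNReal.ofReal_add hγ0 (sub_nonneg.2 hγ), add_sub_cancel, ENNReal.ofReal_one, one_mul]
    have hγt : ENNReal.ofReal γ * μ t ≠ ∞ := ENNReal.mul_ne_top ENNReal.ofReal_ne_top ht
    constructor <;> intro h
    · rw [← ENNReal.add_le_add_iff_left hγt, ← hsplit]
      gcongr
    · have hsdiff : μ (t \ s) ≠ ∞ := measure_ne_top_of_subset Set.sdiff_subset ht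
      rw [← ENNReal.add_le_add_iff_right hsdiff, hsplit]
      gcongr

/-- `ω` is `γ`-thick for `μ` with respect to the density `ρ`: it fills a proportion at least `γ`
of each ball `B(x, ρ x)`. For `μ = volume` on `En n` this is `ThickWith`. The set `ω` may be
non-measurable, `μ` being then the outer measure. -/
def IsThick {X : Type*} [PseudoMetricSpace X] [MeasurableSpace X] (μ : Measure X) (γ : ℝ)
    (ρ : X → ℝ) (ω : Set X) : Prop :=
  ∀ x, ENNReal.ofReal γ * μ (Metric.ball x (ρ x)) ≤ μ (ω ∩ Metric.ball x (ρ x))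

namespace IsThick

variable {X : Type*} [PseudoMetricSpace X] [MeasurableSpace X] [OpensMeasurableSpace X]
  {μ : Measure X} {γ : ℝ} {ρ : X → ℝ} {ω : Set X}

theorem toMeasurable_iff [SFinite μ] : IsThick μ γ ρ (toMeasurable μ ω) ↔ IsThick μ γ ρ ω := by
  simp only [IsThick, Measure.measure_toMeasurable_inter_of_sFinite measurableSet_ball]

theorem iff_restrict_compl_le [ProperSpace X] [IsFiniteMeasureOnCompacts μ]
    (hω : MeasurableSet ω) (hγ : γ ≤ 1) :
    IsThick μ γ ρ ω ↔ ∀ x, μ.restrict ωᶜ (Metric.ball x (ρ x)) ≤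
      ENNReal.ofReal (1 - γ) * μ (Metric.ball x (ρ x)) :=
  forall_congr' fun x ↦ by
    rw [Measure.restrict_apply measurableSet_ball, ← Set.sdiff_eq,
      ofReal_mul_measure_le_measure_inter_iff hω measure_ball_lt_top.ne hγ]

end IsThick

theorem thick_comparison_general {E : Type*} [NormedAddCommGroup E] [NormedSpace ℝ E]
    [FiniteDimensional ℝ E] [MeasurableSpace E] [BorelSpace E] {μ : Measure E}
    [μ.IsAddHaarMeasure] {ρ₁ ρ₂ : E → ℝ} (hρ₁cont : Continuous ρ₁) (hρ₁pos : ∀ x, 0 < ρ₁ x)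
    (hle : ∀ x, ρ₁ x ≤ ρ₂ x) {ω : Set E} {γ : ℝ} (hγ : γ ≤ 1) (hthick : IsThick μ γ ρ₁ ω) :
    IsThick μ (1 - (1 - γ) * 6 ^ Module.finrank ℝ E) ρ₂ ω := by
  have : ProperSpace E := FiniteDimensional.proper ℝ E
  have hωmeas : MeasurableSet (toMeasurable μ ω) := measurableSet_toMeasurable μ ω
  have hdefect : 0 ≤ (1 - γ) * 6 ^ Module.finrank ℝ E :=
    mul_nonneg (sub_nonneg.2 hγ) (by positivity)
  rw [← IsThick.toMeasurable_iff, IsThick.iff_restrict_compl_le hωmeas hγ] at hthick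
  rw [← IsThick.toMeasurable_iff, IsThick.iff_restrict_compl_le hωmeas (sub_le_self 1 hdefect)]
  intro x
  rw [sub_sub_cancel, ENNReal.ofReal_mul (sub_nonneg.2 hγ), ENNReal.ofReal_pow (by positivity),
    ENNReal.ofReal_ofNat, mul_assoc]
  exact measure_ball_le_of_forall_measure_ball_le hρ₁cont hρ₁pos hthick (hle x)

/-- **Lemma "thick_comparison"**: if ω is γ-thick with respect to ρ₁ with
1 - 6^{-n} < γ ≤ 1 and ρ₁ ≤ ρ₂, then ω is (1-(1-γ)6^n)-thick with respect to ρ₂. -/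
theorem thick_comparison (n : ℕ) (ρ₁ ρ₂ : En n → ℝ)
    (hρ₁cont : Continuous ρ₁) (hρ₂cont : Continuous ρ₂)
    (hρ₁pos : ∀ x, 0 < ρ₁ x) (hρ₂pos : ∀ x, 0 < ρ₂ x)
    (hle : ∀ x, ρ₁ x ≤ ρ₂ x)
    (ω : Set (En n)) (hω : MeasurableSet ω)
    (γ : ℝ) (hγ : 1 - 1 / 6 ^ n < γ) (hγ1 : γ ≤ 1)
    (hthick : ThickWith n γ ρ₁ ω) :
    0 < 1 - (1 - γ) * 6 ^ n ∧ ThickWith n (1 - (1 - γ) * 6 ^ n) ρ₂ ω := by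
  refine ⟨sub_pos.2 ((lt_div_iff₀ (by positivity)).1 (sub_lt_comm.1 hγ)), ?_⟩
  simpa only [finrank_euclideanSpace_fin] using!
    thick_comparison_general hρ₁cont hρ₁pos hle hγ1 hthick

end
end

section
/- Let (T_t)_{t≥0} be a strongly continuous contraction semigroup on L²(ℝ^n) satisfying the quantitative Gelfand–Shilov smoothing estimates with parameters 1/2 < s ≤ 1, C_s > 1, 0 < t_0 ≤ 1, m_1 > 0, m_2 ≥ 0. Then there exists a constant C̃ > 1 such that for all k ∈ ℕ, all g ∈ L²(ℝ^n) and all 0 < t ≤ t_0, ‖(H + n)^k (T_t g)‖_{L²(ℝ^n)} ≤ (C̃^{1+k} / t^{2m_1 k + m_2}) (k!)^{1/s} ‖g‖_{L²(ℝ^n)}, where H = −Δ_x + |x|² is the harmonic oscillator. -/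
open MeasureTheory
open scoped BigOperators ENNReal NNReal

noncomputable section

abbrev L2sp (n : ℕ) := Lp ℂ 2 (volume : Measure (En n))

/-- Strongly continuous contraction semigroup on L²(ℝⁿ). -/
def IsContractionSG (n : ℕ) (T : ℝ → L2sp n →L[ℂ] L2sp n) : Prop :=
  T 0 = ContinuousLinearMap.id ℂ (L2sp n) ∧
  (∀ s t : ℝ, 0 ≤ s → 0 ≤ t → T (s + t) = (T s).comp (T t)) ∧
  (∀ t : ℝ, 0 ≤ t → ∀ g : L2sp n, ‖T t g‖ ≤ ‖g‖) ∧
  (∀ g : L2sp n, ContinuousOn (fun t => T t g) (Set.Ici (0 : ℝ)))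

/-- Quantitative Gelfand–Shilov smoothing estimates with parameters
s, C_s, t_0, m_1, m_2: for 0 < t ≤ t₀, T_t g is smooth and
‖x^α ∂^β (T_t g)‖_{L²} ≤ (C_s^{1+|α|+|β|}/t^{m₁(|α|+|β|)+m₂}) (α!)^{1/2s}(β!)^{1/2s} ‖g‖. -/
def HasGSsmoothing (n : ℕ) (T : ℝ → L2sp n →L[ℂ] L2sp n)
    (s Cs t0 m1 m2 : ℝ) : Prop :=
  ∀ t : ℝ, 0 < t → t ≤ t0 → ∀ g : L2sp n,
    ∃ u : En n → ℂ, ContDiff ℝ (⊤ : ℕ∞) u ∧ (T t g : En n → ℂ) =ᵐ[volume] u ∧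
      ∀ α β : Fin n → ℕ,
        L2norm n (fun x => (monomial n α x : ℂ) * pderivMulti β u x) ≤
          Cs ^ (1 + (∑ j, α j) + (∑ j, β j)) /
              t ^ (m1 * (((∑ j, α j) + (∑ j, β j) : ℕ) : ℝ) + m2) *
            ((∏ j, (α j).factorial : ℕ) : ℝ) ^ (1 / (2 * s)) *
            ((∏ j, (β j).factorial : ℕ) : ℝ) ^ (1 / (2 * s)) * ‖g‖


/-- The harmonic oscillator H = -Δ + |x|². -/
def harmonicOsc {n : ℕ} (f : En n → ℂ) : En n → ℂ :=
  fun x => -(∑ j, pderiv1 j (pderiv1 j f) x) + ((‖x‖ ^ 2 : ℝ) : ℂ) * f x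

/-!
If `u` and `(H + n)^k u` lie in `L²`, then so does every word of length at most `2k` in the
operators `xⱼ`, `∂ⱼ` applied to `u`. Without this elliptic regularity an estimate on `L2norm`
carries no information, because `L2norm` is `0` on functions outside `L²`. To prove it, Green's
formula is localized by cutoffs `φ(x / R)`. The energies `∫ φ^(2m+2) |(H + n)^j u|²` and the
Dirichlet energies between them are approximately log-convex in `j` uniformly in `R`, which bounds
the intermediate powers by the extreme ones; two derivatives are then gained at a time from the
commutators `[H + n, ∂ⱼ] = -2 xⱼ` and `[H + n, xⱼ] = -2 ∂ⱼ`.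

For the quantitative estimate, `(H + n) x^α ∂^β` is a sum of five kinds of terms `x^α' ∂^β'` of
order at most `q + 2`, where `q = |α| + |β|`, with coefficients at most quadratic in `q`. Since
`σ = 1 / (2s)` is at least `1 / 2`, these coefficients are absorbed by the growth of the
Gelfand–Shilov bound `M r^q (q!)^σ`: lowering the order by two pays for one factor of size `q`.
Starting from `x^0 ∂^0`, `k` steps cost `(6n)^k` and reach order `2k`, and `(2k)! ≤ 4^k (k!)²`.
-/

/-! ### Smooth functions and the Weyl algebra -/

section SmoothFunctions

variable {n : ℕ}

/-- The space `C^∞(ℝⁿ, ℂ)`. Differential operators are elements of `Module.End ℂ (smoothFun n)`, so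
that commutation relations are identities in a ring. -/
def smoothFun (n : ℕ) : Submodule ℂ (En n → ℂ) where
  carrier := {f | ContDiff ℝ (⊤ : ℕ∞) f}
  add_mem' {f g} (hf : ContDiff ℝ (⊤ : ℕ∞) f) (hg : ContDiff ℝ (⊤ : ℕ∞) g) := hf.add hg
  zero_mem' := show ContDiff ℝ (⊤ : ℕ∞) fun _ : En n => (0 : ℂ) from contDiff_const
  smul_mem' _ f (hf : ContDiff ℝ (⊤ : ℕ∞) f) := contDiff_const.smul hf

-- With these instances fixed, the ring and semiring structures on `Module.End ℂ (smoothFun n)`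
-- unify.
instance : AddCommGroup (smoothFun n) := inferInstance

instance : Module ℂ (smoothFun n) := inferInstance

theorem contDiff_smoothFun (f : smoothFun n) : ContDiff ℝ (⊤ : ℕ∞) (f : En n → ℂ) :=
  f.2

theorem differentiable_smoothFun (f : smoothFun n) : Differentiable ℝ (f : En n → ℂ) :=
  (contDiff_smoothFun f).differentiable (by simp)

theorem contDiff_fderiv_single {E : Type*} [NormedAddCommGroup E] [NormedSpace ℝ E]
    {f : En n → E} (hf : ContDiff ℝ (⊤ : ℕ∞) f) (j : Fin n) :
    ContDiff ℝ (⊤ : ℕ∞) fun x => fderiv ℝ f x (EuclideanSpace.single j 1) :=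
  (hf.fderiv_right (by simp)).clm_apply contDiff_const

/-- The partial derivative `∂ⱼ` of a real-valued function. -/
def pderivReal (j : Fin n) (a : En n → ℝ) : En n → ℝ :=
  fun x => fderiv ℝ a x (EuclideanSpace.single j 1)

theorem contDiff_pderivReal (j : Fin n) {a : En n → ℝ} (ha : ContDiff ℝ (⊤ : ℕ∞) a) :
    ContDiff ℝ (⊤ : ℕ∞) (pderivReal j a) :=
  contDiff_fderiv_single ha j

/-- The operator `∂ⱼ` on smooth functions. -/
def derivOp (j : Fin n) : Module.End ℂ (smoothFun n) where
  toFun f := ⟨pderiv1 j f, contDiff_fderiv_single f.2 j⟩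
  map_add' f g := by
    ext x
    simp [pderiv1, fderiv_add (differentiable_smoothFun f x) (differentiable_smoothFun g x)]
  map_smul' c f := by
    ext x
    simp [pderiv1, fderiv_const_smul (differentiable_smoothFun f x)]

/-- The operator of multiplication by a smooth real function. -/
def mulOp (a : En n → ℝ) (ha : ContDiff ℝ (⊤ : ℕ∞) a) : Module.End ℂ (smoothFun n) where
  toFun f := ⟨fun x => (a x : ℂ) * f.1 x, (Complex.ofRealCLM.contDiff.comp ha).mul f.2⟩
  map_add' f g := by
    ext x
    simp [mul_add]
  map_smul' c f := by
    ext x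
    simp [mul_left_comm]

theorem contDiff_coord (j : Fin n) : ContDiff ℝ (⊤ : ℕ∞) fun x : En n => x j := by
  fun_prop

/-- The operator of multiplication by the coordinate `xⱼ`. -/
def coordOp (j : Fin n) : Module.End ℂ (smoothFun n) :=
  mulOp (fun x => x j) (contDiff_coord j)

@[simp]
theorem derivOp_apply (j : Fin n) (f : smoothFun n) : (derivOp j f : En n → ℂ) = pderiv1 j f :=
  rfl

@[simp]
theorem mulOp_apply (a : En n → ℝ) (ha : ContDiff ℝ (⊤ : ℕ∞) a) (f : smoothFun n) (x : En n) :
    (mulOp a ha f : En n → ℂ) x = a x * f.1 x :=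
  rfl

@[simp]
theorem coordOp_apply (j : Fin n) (f : smoothFun n) (x : En n) :
    (coordOp j f : En n → ℂ) x = x j * f.1 x :=
  rfl

theorem derivOp_mul_mulOp (j : Fin n) {a : En n → ℝ} (ha : ContDiff ℝ (⊤ : ℕ∞) a) :
    derivOp j * mulOp a ha =
      mulOp a ha * derivOp j + mulOp (pderivReal j a) (contDiff_pderivReal j ha) := by
  ext f x
  have ha' : HasFDerivAt (fun y => (a y : ℂ)) (Complex.ofRealCLM ∘L fderiv ℝ a x) x :=
    Complex.ofRealCLM.hasFDerivAt.comp x ((ha.differentiable (by simp)) x).hasFDerivAt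
  have hmul := (ha'.mul (differentiable_smoothFun f x).hasFDerivAt).fderiv
  change fderiv ℝ ((fun y => (a y : ℂ)) * f.1) x _ =
    a x * fderiv ℝ f.1 x _ + pderivReal j a x * f.1 x
  rw [hmul]
  simp [pderivReal, mul_comm]

theorem derivOp_comm (i j : Fin n) : Commute (derivOp (n := n) i) (derivOp j) := by
  ext f x
  have hdiff : DifferentiableAt ℝ (fderiv ℝ f.1) x :=
    (((contDiff_smoothFun f).fderiv_right (m := (⊤ : ℕ∞)) (by simp)).differentiable (by simp)) x
  have hsymm : IsSymmSndFDerivAt ℝ f.1 x :=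
    (contDiff_smoothFun f).contDiffAt.isSymmSndFDerivAt (by simp [ENat.LEInfty.out])
  have hsnd (v w : En n) :
      fderiv ℝ (fun y => fderiv ℝ f.1 y v) x w = fderiv ℝ (fderiv ℝ f.1) x w v := by
    rw [fderiv_clm_apply hdiff (differentiableAt_const v)]
    simp
  change fderiv ℝ (fun y => fderiv ℝ f.1 y _) x _ = fderiv ℝ (fun y => fderiv ℝ f.1 y _) x _
  rw [hsnd, hsnd, hsymm.eq]

theorem coordOp_comm (i j : Fin n) : Commute (coordOp (n := n) i) (coordOp j) := by
  ext f x
  simp [mul_left_comm]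

theorem pderivReal_coord (i j : Fin n) (x : En n) :
    pderivReal i (fun y => y j) x = if i = j then 1 else 0 := by
  have hproj : fderiv ℝ (fun y : En n => y j) x = EuclideanSpace.proj j :=
    (EuclideanSpace.proj (𝕜 := ℝ) j).hasFDerivAt.fderiv
  simp [pderivReal, hproj, eq_comm]

theorem derivOp_mul_coordOp (i j : Fin n) :
    derivOp i * coordOp j = coordOp j * derivOp i + if i = j then 1 else 0 := by
  rw [coordOp, derivOp_mul_mulOp]
  congr 1
  ext f x
  rw [mulOp_apply, pderivReal_coord]
  split_ifs <;> simp

/-- The generators `∂₁, …, ∂ₙ, x₁, …, xₙ` of the Weyl algebra; `Sum.swap` exchanges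
`∂ⱼ` and `xⱼ`. -/
def weylOp : Fin n ⊕ Fin n → Module.End ℂ (smoothFun n) :=
  Sum.elim derivOp coordOp

variable (n) in
/-- The shifted oscillator `H + n`, as the sum of the one-dimensional operators `xⱼ² - ∂ⱼ² + 1`. -/
def shiftedOsc : Module.End ℂ (smoothFun n) :=
  ∑ j, (coordOp j ^ 2 - derivOp j ^ 2 + 1)

theorem shiftedOsc_apply (f : smoothFun n) :
    (shiftedOsc n f : En n → ℂ) = fun x => harmonicOsc (f : En n → ℂ) x + n * f.1 x := by
  ext x
  have hterm (j : Fin n) :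
      ((coordOp j ^ 2 - derivOp j ^ 2 + 1 : Module.End ℂ (smoothFun n)) f).1 x =
      (x j : ℂ) ^ 2 * f.1 x - pderiv1 j (pderiv1 j f.1) x + f.1 x := by
    simp [pow_two, mul_assoc]
  simp only [shiftedOsc, LinearMap.sum_apply, Submodule.coe_sum, Finset.sum_apply, hterm,
    harmonicOsc, EuclideanSpace.real_norm_sq_eq]
  simp only [Finset.sum_add_distrib, Finset.sum_sub_distrib, Finset.sum_const, Finset.card_univ,
    Fintype.card_fin, nsmul_eq_mul, Complex.ofReal_sum, Complex.ofReal_pow, Finset.sum_mul]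
  ring

theorem shiftedOsc_pow_apply (k : ℕ) (f : smoothFun n) :
    ((shiftedOsc n ^ k) f : En n → ℂ) =
      (fun v : En n → ℂ => fun x => harmonicOsc v x + (n : ℂ) * v x)^[k] f := by
  induction k with
  | zero => rfl
  | succ k ih => rw [Function.iterate_succ_apply', ← ih, pow_succ', Module.End.mul_apply,
      shiftedOsc_apply]

section CanonicalCommutation

variable {R : Type*} [Ring R] {x d : R}

theorem oscillator_mul_deriv (h : d * x = x * d + 1) :
    (x ^ 2 - d ^ 2 + 1) * d = d * (x ^ 2 - d ^ 2 + 1) - 2 * x := by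
  have hxd : x * d = d * x - 1 := eq_sub_of_add_eq h.symm
  have hsq : x ^ 2 * d = d * x ^ 2 - 2 * x := by
    rw [pow_two, mul_assoc, hxd, mul_sub, ← mul_assoc, hxd]
    noncomm_ring
  rw [add_mul, sub_mul, hsq]
  noncomm_ring

theorem oscillator_mul_coord (h : d * x = x * d + 1) :
    (x ^ 2 - d ^ 2 + 1) * x = x * (x ^ 2 - d ^ 2 + 1) - 2 * d := by
  have hsq : d ^ 2 * x = x * d ^ 2 + 2 * d := by
    rw [pow_two, mul_assoc, h, mul_add, ← mul_assoc, h]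
    noncomm_ring
  rw [add_mul, sub_mul, hsq]
  noncomm_ring

end CanonicalCommutation

theorem oscillator_mul_weylOp (l : Fin n) (i : Fin n ⊕ Fin n) :
    (coordOp l ^ 2 - derivOp l ^ 2 + 1) * weylOp i =
      weylOp i * (coordOp l ^ 2 - derivOp l ^ 2 + 1) -
        if l = i.elim id id then 2 * weylOp i.swap else 0 := by
  have hccr : derivOp l * coordOp l = coordOp l * derivOp l + 1 := by
    simp [derivOp_mul_coordOp]
  split_ifs with hl
  · rcases i with j | j <;> obtain rfl : l = j := hl
    · exact oscillator_mul_deriv hccr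
    · exact oscillator_mul_coord hccr
  · have hcomm : Commute (coordOp l) (weylOp i) ∧ Commute (derivOp l) (weylOp i) := by
      rcases i with j | j <;> replace hl : l ≠ j := hl
      · exact ⟨by simp [weylOp, commute_iff_eq, derivOp_mul_coordOp, hl.symm], derivOp_comm l j⟩
      · exact ⟨coordOp_comm l j, by simp [weylOp, commute_iff_eq, derivOp_mul_coordOp, hl]⟩
    rw [sub_zero]
    exact ((hcomm.1.pow_left 2).sub_left (hcomm.2.pow_left 2)).add_left (Commute.one_left _)

theorem shiftedOsc_mul_weylOp (i : Fin n ⊕ Fin n) :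
    shiftedOsc n * weylOp i = weylOp i * shiftedOsc n - 2 * weylOp i.swap := by
  simp [shiftedOsc, Finset.sum_mul, Finset.mul_sum, oscillator_mul_weylOp]

/-- The smooth functions that are square integrable. -/
def smoothL2 (n : ℕ) : Submodule ℂ (smoothFun n) where
  carrier := {f | MemLp (f : En n → ℂ) 2 volume}
  add_mem' {f g} (hf : MemLp (f : En n → ℂ) 2 volume) (hg : MemLp (g : En n → ℂ) 2 volume) :=
    hf.add hg
  zero_mem' := show MemLp (fun _ : En n => (0 : ℂ)) 2 volume from MemLp.zero
  smul_mem' c f (hf : MemLp (f : En n → ℂ) 2 volume) := hf.const_smul c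

/-- The smooth part of the Shubin–Sobolev space `Qᵐ`: every word of length at most `m` in the
generators `∂ⱼ`, `xⱼ` maps the function into `L²`. -/
def shubinSobolev (n : ℕ) : ℕ → Submodule ℂ (smoothFun n)
  | 0 => smoothL2 n
  | m + 1 => shubinSobolev n m ⊓ ⨅ i, (shubinSobolev n m).comap (weylOp i)

theorem mem_shubinSobolev_succ {m : ℕ} {f : smoothFun n} :
    f ∈ shubinSobolev n (m + 1) ↔
      f ∈ shubinSobolev n m ∧ ∀ i, weylOp i f ∈ shubinSobolev n m := by
  simp [shubinSobolev]

theorem shubinSobolev_antitone (n : ℕ) : Antitone (shubinSobolev n) :=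
  antitone_nat_of_succ_le fun _ => inf_le_left

end SmoothFunctions

/-! ### Cutoffs and localized energies -/

section Weights

variable {n : ℕ}

/-- A smooth compactly supported real function, used as a weight in `L²` pairings of smooth
functions that need not be square integrable. -/
structure Weight (n : ℕ) where
  toFun : En n → ℝ
  contDiff : ContDiff ℝ (⊤ : ℕ∞) toFun
  hasCompactSupport : HasCompactSupport toFun

instance : CoeFun (Weight n) fun _ => En n → ℝ :=
  ⟨Weight.toFun⟩

/-- The partial derivative of a weight. -/
def Weight.pderiv (η : Weight n) (l : Fin n) : Weight n where
  toFun := pderivReal l η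
  contDiff := contDiff_pderivReal l η.contDiff
  hasCompactSupport := η.hasCompactSupport.fderiv_apply ℝ _

theorem Weight.integrable_mul (η : Weight n) {f : En n → ℝ} (hf : Continuous f) :
    Integrable fun x => η x * f x :=
  (η.contDiff.continuous.mul hf).integrable_of_hasCompactSupport η.hasCompactSupport.mul_right

theorem continuous_inner_smoothFun (F G : smoothFun n) :
    Continuous fun x => inner ℝ (F.1 x) (G.1 x) :=
  (contDiff_smoothFun F).continuous.inner (contDiff_smoothFun G).continuous

/-- The biadditive form `(F, G) ↦ ∫ η Re(F̄ G)`. -/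
def weightedInner (η : Weight n) : smoothFun n →+ smoothFun n →+ ℝ :=
  AddMonoidHom.mk' (fun F => AddMonoidHom.mk' (fun G => ∫ x, η x * inner ℝ (F.1 x) (G.1 x))
    fun G G' => by
      simp only [Submodule.coe_add, Pi.add_apply, inner_add_right, mul_add]
      exact integral_add (η.integrable_mul (continuous_inner_smoothFun F G))
        (η.integrable_mul (continuous_inner_smoothFun F G')))
    fun F F' => by
      ext G
      simp only [AddMonoidHom.mk'_apply, AddMonoidHom.add_apply, Submodule.coe_add, Pi.add_apply,
        inner_add_left, mul_add]
      exact integral_add (η.integrable_mul (continuous_inner_smoothFun F G))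
        (η.integrable_mul (continuous_inner_smoothFun F' G))

theorem weightedInner_apply (η : Weight n) (F G : smoothFun n) :
    weightedInner η F G = ∫ x, η x * inner ℝ (F.1 x) (G.1 x) :=
  rfl

theorem weightedInner_comm (η : Weight n) (F G : smoothFun n) :
    weightedInner η F G = weightedInner η G F := by
  simp only [weightedInner_apply, real_inner_comm]

theorem abs_weightedInner_le {η a b : Weight n} {κ ε : ℝ} (hκ : 0 ≤ κ) (hε : 0 < ε)
    (ha : ∀ x, 0 ≤ a x) (hb : ∀ x, 0 ≤ b x) (h : ∀ x, η x ^ 2 ≤ κ * (a x * b x))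
    (F G : smoothFun n) :
    |weightedInner η F G| ≤ ε * weightedInner a F F + κ / (4 * ε) * weightedInner b G G := by
  have hF := (a.integrable_mul (continuous_inner_smoothFun F F)).const_mul ε
  have hG := (b.integrable_mul (continuous_inner_smoothFun G G)).const_mul (κ / (4 * ε))
  simp only [weightedInner_apply]
  rw [← integral_const_mul, ← integral_const_mul, ← integral_add hF hG, ← Real.norm_eq_abs]
  refine norm_integral_le_of_norm_le (hF.add hG) (ae_of_all _ fun x => ?_)
  simp only [real_inner_self_eq_norm_sq, Real.norm_eq_abs]
  have hax := ha x
  have hbx := hb x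
  refine abs_le_of_sq_le_sq ?_ (by positivity)
  have hinner : inner ℝ (F.1 x) (G.1 x) ^ 2 ≤ ‖F.1 x‖ ^ 2 * ‖G.1 x‖ ^ 2 := by
    rw [← mul_pow, ← sq_abs]
    gcongr
    exact abs_real_inner_le_norm _ _
  calc (η x * inner ℝ (F.1 x) (G.1 x)) ^ 2
      ≤ κ * (a x * b x) * (‖F.1 x‖ ^ 2 * ‖G.1 x‖ ^ 2) := by
        rw [mul_pow]
        exact mul_le_mul (h x) hinner (sq_nonneg _) (by positivity)
    _ = 4 * (ε * (a x * ‖F.1 x‖ ^ 2)) * (κ / (4 * ε) * (b x * ‖G.1 x‖ ^ 2)) := by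
        field_simp
    _ ≤ _ := four_mul_le_sq_add _ _

/-- A cutoff: a weight with values in `[0, 1]` whose partial derivatives are bounded by `c`. -/
structure Cutoff (n : ℕ) (c : ℝ) extends Weight n where
  nonneg : ∀ x, 0 ≤ toFun x
  le_one : ∀ x, toFun x ≤ 1
  abs_pderivReal_le : ∀ l x, |pderivReal l toFun x| ≤ c

variable {c : ℝ}

/-- The weight `φ ^ (2 * (m + 1))`. The exponent is positive for every `m`, so that the support is
compact, and even, so that Young's inequality applies between neighbouring values of `m`. -/
def Cutoff.evenPow (φ : Cutoff n c) (m : ℕ) : Weight n where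
  toFun x := φ.toFun x ^ (2 * (m + 1))
  contDiff := φ.contDiff.pow _
  hasCompactSupport := φ.hasCompactSupport.comp_left (g := fun y : ℝ => y ^ (2 * (m + 1)))
    (zero_pow (by omega))

theorem Cutoff.evenPow_apply (φ : Cutoff n c) (m : ℕ) (x : En n) :
    φ.evenPow m x = φ.toFun x ^ (2 * (m + 1)) :=
  rfl

theorem Cutoff.evenPow_nonneg (φ : Cutoff n c) (m : ℕ) (x : En n) : 0 ≤ φ.evenPow m x :=
  pow_nonneg (φ.nonneg x) _

theorem Cutoff.evenPow_le_one (φ : Cutoff n c) (m : ℕ) (x : En n) : φ.evenPow m x ≤ 1 :=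
  pow_le_one₀ (φ.nonneg x) (φ.le_one x)

theorem Cutoff.pderiv_evenPow (φ : Cutoff n c) (m : ℕ) (l : Fin n) (x : En n) :
    (φ.evenPow m).pderiv l x =
      2 * (m + 1) * φ.toFun x ^ (2 * m + 1) * pderivReal l φ.toFun x := by
  have h := ((φ.contDiff.differentiable (by simp) x).hasFDerivAt.pow (2 * (m + 1))).fderiv
  change fderiv ℝ (fun y => φ.toFun y ^ (2 * (m + 1))) x _ = _
  rw [h]
  simp [pderivReal, mul_add]

/-- The weighted energy `∫ φ ^ (2 * (m + 1)) |F|²`. -/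
def Cutoff.energy (φ : Cutoff n c) (m : ℕ) (F : smoothFun n) : ℝ :=
  weightedInner (φ.evenPow m) F F

theorem Cutoff.energy_nonneg (φ : Cutoff n c) (m : ℕ) (F : smoothFun n) : 0 ≤ φ.energy m F :=
  integral_nonneg fun x => mul_nonneg (φ.evenPow_nonneg m x) real_inner_self_nonneg

theorem Cutoff.energy_anti (φ : Cutoff n c) {m m' : ℕ} (h : m ≤ m') (F : smoothFun n) :
    φ.energy m' F ≤ φ.energy m F := by
  refine integral_mono ((φ.evenPow m').integrable_mul (continuous_inner_smoothFun F F))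
    ((φ.evenPow m).integrable_mul (continuous_inner_smoothFun F F)) fun x => ?_
  refine mul_le_mul_of_nonneg_right ?_ real_inner_self_nonneg
  exact pow_le_pow_of_le_one (φ.nonneg x) (φ.le_one x) (by omega)

theorem Cutoff.energy_le_integral (φ : Cutoff n c) (m : ℕ) {F : smoothFun n}
    (hF : F ∈ smoothL2 n) : φ.energy m F ≤ ∫ x, ‖F.1 x‖ ^ 2 := by
  refine integral_mono ((φ.evenPow m).integrable_mul (continuous_inner_smoothFun F F))
    ((memLp_two_iff_integrable_sq_norm hF.1).1 hF) fun x => ?_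
  simp only [real_inner_self_eq_norm_sq]
  exact mul_le_of_le_one_left (by positivity) (φ.evenPow_le_one m x)

theorem Cutoff.abs_weightedInner_le (φ : Cutoff n c) (m : ℕ) {ε : ℝ} (hε : 0 < ε)
    (F G : smoothFun n) :
    |weightedInner (φ.evenPow (m + 1)) F G| ≤
      ε * φ.energy (m + 2) F + 1 / (4 * ε) * φ.energy m G := by
  refine _root_.abs_weightedInner_le zero_le_one hε (φ.evenPow_nonneg _) (φ.evenPow_nonneg _)
    (fun x => le_of_eq ?_) F G
  simp only [φ.evenPow_apply]
  ring

theorem Cutoff.abs_weightedInner_pderiv_le (φ : Cutoff n c) (m : ℕ) (l : Fin n) {ε : ℝ}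
    (hε : 0 < ε) (F G : smoothFun n) :
    |weightedInner ((φ.evenPow (m + 1)).pderiv l) F G| ≤
      ε * φ.energy (m + 1) F + (2 * (m + 2) * c) ^ 2 / (4 * ε) * φ.energy m G := by
  refine _root_.abs_weightedInner_le (sq_nonneg _) hε (φ.evenPow_nonneg _) (φ.evenPow_nonneg _)
    (fun x => ?_) F G
  have hφ := φ.nonneg x
  have hderiv : pderivReal l φ.toFun x ^ 2 ≤ c ^ 2 := by
    rw [← sq_abs]
    gcongr
    exact φ.abs_pderivReal_le l x
  rw [φ.pderiv_evenPow, φ.evenPow_apply, φ.evenPow_apply]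
  calc _ = (2 * (m + 2)) ^ 2 * φ.toFun x ^ (2 * (2 * m + 3)) * pderivReal l φ.toFun x ^ 2 := by
        push_cast
        ring
    _ ≤ (2 * (m + 2)) ^ 2 * φ.toFun x ^ (2 * (2 * m + 3)) * c ^ 2 := by gcongr
    _ = _ := by ring

theorem pderivReal_comp_smul (l : Fin n) {a : En n → ℝ} (ha : Differentiable ℝ a) (r : ℝ)
    (x : En n) : pderivReal l (fun y => a (r • y)) x = r * pderivReal l a (r • x) := by
  have h : HasFDerivAt (fun y => a (r • y)) _ x :=
    (ha (r • x)).hasFDerivAt.comp x ((hasFDerivAt_id x).const_smul r)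
  simp [pderivReal, h.fderiv]

/-- Dilating a bump function by a factor `1 / R ≤ 1` does not increase its derivatives. -/
theorem exists_cutoff_eq_one_on_ball (n : ℕ) :
    ∃ c, ∀ R : ℝ, 1 ≤ R → ∃ φ : Cutoff n c, ∀ x ∈ Metric.ball 0 R, φ.toFun x = 1 := by
  let ψ : ContDiffBump (0 : En n) := ⟨1, 2, one_pos, one_lt_two⟩
  have hψ : ContDiff ℝ (⊤ : ℕ∞) ψ := ψ.contDiff
  have hbound (l : Fin n) : ∃ C, ∀ x, |pderivReal l ψ x| ≤ C :=
    (contDiff_pderivReal l hψ).continuous.bounded_above_of_compact_support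
      (ψ.hasCompactSupport.fderiv_apply ℝ _)
  choose C hC using hbound
  have hC0 (l : Fin n) : 0 ≤ C l := (abs_nonneg _).trans (hC l 0)
  refine ⟨∑ l, C l, fun R hR => ?_⟩
  have hR0 : 0 < R := one_pos.trans_le hR
  refine ⟨⟨⟨fun x => ψ (R⁻¹ • x), hψ.comp (contDiff_const_smul R⁻¹),
    ψ.hasCompactSupport.comp_smul (inv_ne_zero hR0.ne')⟩, fun x => ψ.nonneg, fun x => ψ.le_one,
    fun l x => ?_⟩, fun x hx => ψ.one_of_mem_closedBall ?_⟩
  · rw [pderivReal_comp_smul l (hψ.differentiable (by simp)), abs_mul, abs_of_pos (inv_pos.2 hR0)]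
    calc R⁻¹ * |pderivReal l ψ (R⁻¹ • x)| ≤ 1 * C l := by
          gcongr
          exacts [inv_le_one_of_one_le₀ hR, hC l _]
      _ ≤ ∑ l, C l := by
          rw [one_mul]
          exact Finset.single_le_sum (fun l _ => hC0 l) (Finset.mem_univ l)
  · rw [mem_ball_zero_iff] at hx
    rw [mem_closedBall_zero_iff, norm_smul, norm_inv, Real.norm_of_nonneg hR0.le]
    change R⁻¹ * ‖x‖ ≤ 1
    rw [inv_mul_le_iff₀ hR0, mul_one]
    exact hx.le

theorem exists_mem_smoothL2_of_energy_le (n : ℕ) :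
    ∃ c, ∀ (m : ℕ) (F : smoothFun n) (K : ℝ),
      (∀ φ : Cutoff n c, φ.energy m F ≤ K) → F ∈ smoothL2 n := by
  obtain ⟨c, hc⟩ := exists_cutoff_eq_one_on_ball n
  refine ⟨c, fun m F K hK => ?_⟩
  have hF : Continuous F.1 := (contDiff_smoothFun F).continuous
  have hlocal (R : ℕ) : IntegrableOn (fun x => ‖F.1 x‖ ^ 2) (Metric.ball 0 (R + 1 : ℝ)) :=
    ((hF.norm.pow 2).continuousOn.integrableOn_compact
      (isCompact_closedBall (0 : En n) _)).mono_set Metric.ball_subset_closedBall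
  refine (memLp_two_iff_integrable_sq_norm hF.aestronglyMeasurable).2 <|
    (aecover_ball (x := (0 : En n)) (Filter.tendsto_atTop_add_const_right _ 1
      (tendsto_natCast_atTop_atTop (R := ℝ)))).integrable_of_integral_norm_bounded
      K hlocal (Filter.Eventually.of_forall fun R => ?_)
  obtain ⟨φ, hφ⟩ := hc (R + 1) (by simp)
  calc ∫ x in Metric.ball (0 : En n) (R + 1), ‖‖F.1 x‖ ^ 2‖
      = ∫ x in Metric.ball (0 : En n) (R + 1), φ.evenPow m x * inner ℝ (F.1 x) (F.1 x) := by
        refine setIntegral_congr_fun Metric.isOpen_ball.measurableSet fun x hx => ?_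
        simp [φ.evenPow_apply, hφ x hx]
    _ ≤ φ.energy m F := by
        refine setIntegral_le_integral
          ((φ.evenPow m).integrable_mul (continuous_inner_smoothFun F F)) (ae_of_all _ fun x => ?_)
        exact mul_nonneg (φ.evenPow_nonneg m x) real_inner_self_nonneg
    _ ≤ K := hK φ

end Weights

section EnergyEstimates

variable {n : ℕ} {c : ℝ}

theorem weightedInner_derivOp_right (η : Weight n) (l : Fin n) (F G : smoothFun n) :
    weightedInner η F (derivOp l G) =
      -weightedInner η (derivOp l F) G - weightedInner (η.pderiv l) F G := by
  have hinner : ContDiff ℝ (⊤ : ℕ∞) fun x => inner ℝ (F.1 x) (G.1 x) :=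
    (contDiff_smoothFun F).inner ℝ (contDiff_smoothFun G)
  have hleibniz (x : En n) : pderivReal l (fun y => inner ℝ (F.1 y) (G.1 y)) x =
      inner ℝ (F.1 x) ((derivOp l G).1 x) + inner ℝ ((derivOp l F).1 x) (G.1 x) :=
    fderiv_inner_apply ℝ (differentiable_smoothFun F x) (differentiable_smoothFun G x) _
  have hparts : ∫ x, η x * pderivReal l (fun y => inner ℝ (F.1 y) (G.1 y)) x =
      -weightedInner (η.pderiv l) F G :=
    integral_mul_fderiv_eq_neg_fderiv_mul_of_integrable
      ((η.pderiv l).integrable_mul hinner.continuous)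
      (η.integrable_mul (contDiff_pderivReal l hinner).continuous)
      (η.integrable_mul hinner.continuous)
      (fun x _ => η.contDiff.differentiable (by simp) x)
      (fun x _ => hinner.differentiable (by simp) x)
  simp only [hleibniz, mul_add] at hparts
  rw [integral_add (η.integrable_mul (continuous_inner_smoothFun F (derivOp l G)))
    (η.integrable_mul (continuous_inner_smoothFun (derivOp l F) G))] at hparts
  rw [neg_sub_comm, ← hparts]
  exact eq_sub_of_add_eq rfl

/-- The weighted Dirichlet form of `H + n`. -/
def dirichletForm (η : Weight n) (F G : smoothFun n) : ℝ :=
  ∑ i, weightedInner η (weylOp i F) (weylOp i G) + n * weightedInner η F G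

theorem dirichletForm_comm (η : Weight n) (F G : smoothFun n) :
    dirichletForm η F G = dirichletForm η G F := by
  simp only [dirichletForm, weightedInner_comm η F, weightedInner_comm η (weylOp _ F)]

theorem weightedInner_coordOp_right (η : Weight n) (l : Fin n) (F G : smoothFun n) :
    weightedInner η F (coordOp l G) = weightedInner η (coordOp l F) G := by
  simp only [weightedInner_apply]
  congr 1 with x
  rw [coordOp_apply, coordOp_apply, ← Complex.real_smul, ← Complex.real_smul,
    real_inner_smul_left, real_inner_smul_right]

/-- Green's formula: the last sum is the boundary term produced by differentiating the weight. -/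
theorem weightedInner_shiftedOsc_right (η : Weight n) (F G : smoothFun n) :
    weightedInner η F (shiftedOsc n G) =
      dirichletForm η F G + ∑ l, weightedInner (η.pderiv l) F (derivOp l G) := by
  have hterm (l : Fin n) :
      weightedInner η F ((coordOp l ^ 2 - derivOp l ^ 2 + 1 : Module.End ℂ (smoothFun n)) G) =
        weightedInner η (coordOp l F) (coordOp l G) + weightedInner η (derivOp l F) (derivOp l G) +
          weightedInner η F G + weightedInner (η.pderiv l) F (derivOp l G) := by
    simp only [LinearMap.add_apply, LinearMap.sub_apply, pow_two, Module.End.mul_apply,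
      Module.End.one_apply, map_add, map_sub, weightedInner_coordOp_right,
      weightedInner_derivOp_right]
    ring
  rw [shiftedOsc, LinearMap.sum_apply, map_sum]
  simp only [hterm, dirichletForm, Fintype.sum_sum_type,
    weylOp, Sum.elim_inl, Sum.elim_inr, Finset.sum_add_distrib, Finset.sum_const, Finset.card_univ,
    Fintype.card_fin, nsmul_eq_mul]
  ring

/-- The weighted Dirichlet energy of `H + n`. -/
def Cutoff.dirichletEnergy (φ : Cutoff n c) (m : ℕ) (F : smoothFun n) : ℝ :=
  ∑ i, φ.energy m (weylOp i F) + n * φ.energy m F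

theorem Cutoff.dirichletEnergy_nonneg (φ : Cutoff n c) (m : ℕ) (F : smoothFun n) :
    0 ≤ φ.dirichletEnergy m F :=
  add_nonneg (Finset.sum_nonneg fun _ _ => φ.energy_nonneg _ _)
    (mul_nonneg n.cast_nonneg (φ.energy_nonneg _ _))

theorem Cutoff.sum_energy_derivOp_le (φ : Cutoff n c) (m : ℕ) (F : smoothFun n) :
    ∑ l, φ.energy m (derivOp l F) ≤ φ.dirichletEnergy m F := by
  have hcoord : 0 ≤ ∑ l, φ.energy m (coordOp l F) :=
    Finset.sum_nonneg fun _ _ => φ.energy_nonneg _ _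
  have hself : 0 ≤ n * φ.energy m F := mul_nonneg n.cast_nonneg (φ.energy_nonneg _ _)
  simp only [dirichletEnergy, Fintype.sum_sum_type, weylOp, Sum.elim_inl, Sum.elim_inr]
  linarith

theorem Cutoff.sum_energy_weylOp_le (φ : Cutoff n c) (m : ℕ) (F : smoothFun n) :
    ∑ i, φ.energy m (weylOp i F) ≤ φ.dirichletEnergy m F :=
  le_add_of_nonneg_right (mul_nonneg n.cast_nonneg (φ.energy_nonneg _ _))

theorem Cutoff.abs_dirichletForm_le (φ : Cutoff n c) (m : ℕ) {ε : ℝ} (hε : 0 < ε)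
    (F G : smoothFun n) :
    |dirichletForm (φ.evenPow (m + 1)) F G| ≤
      ε * φ.dirichletEnergy (m + 2) F + 1 / (4 * ε) * φ.dirichletEnergy m G := by
  have hsum : |∑ i, weightedInner (φ.evenPow (m + 1)) (weylOp i F) (weylOp i G)| ≤
      ∑ i, (ε * φ.energy (m + 2) (weylOp i F) + 1 / (4 * ε) * φ.energy m (weylOp i G)) :=
    (Finset.abs_sum_le_sum_abs _ _).trans
      (Finset.sum_le_sum fun _ _ => φ.abs_weightedInner_le m hε _ _)
  have hself : |n * weightedInner (φ.evenPow (m + 1)) F G| ≤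
      n * (ε * φ.energy (m + 2) F + 1 / (4 * ε) * φ.energy m G) := by
    rw [abs_mul, Nat.abs_cast]
    gcongr
    exact φ.abs_weightedInner_le m hε _ _
  refine (abs_add_le _ _).trans ((add_le_add hsum hself).trans_eq ?_)
  simp only [dirichletEnergy, Finset.sum_add_distrib, ← Finset.mul_sum]
  ring

theorem Cutoff.abs_sum_weightedInner_pderiv_le (φ : Cutoff n c) (m : ℕ) {ε : ℝ} (hε : 0 < ε)
    (F G : Fin n → smoothFun n) :
    |∑ l, weightedInner ((φ.evenPow (m + 1)).pderiv l) (F l) (G l)| ≤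
      ε * ∑ l, φ.energy (m + 1) (F l) +
        (2 * (m + 2) * c) ^ 2 / (4 * ε) * ∑ l, φ.energy m (G l) := by
  rw [Finset.mul_sum, Finset.mul_sum, ← Finset.sum_add_distrib]
  exact (Finset.abs_sum_le_sum_abs _ _).trans
    (Finset.sum_le_sum fun l _ => φ.abs_weightedInner_pderiv_le m l hε _ _)

theorem Cutoff.dirichletEnergy_succ_le (φ : Cutoff n c) (m : ℕ) (G : smoothFun n) :
    φ.dirichletEnergy (m + 1) G ≤
      2 * weightedInner (φ.evenPow (m + 1)) G (shiftedOsc n G) +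
        n * (2 * (m + 2) * c) ^ 2 * φ.energy m G := by
  have hgreen := weightedInner_shiftedOsc_right (φ.evenPow (m + 1)) G G
  have hboundary := φ.abs_sum_weightedInner_pderiv_le m one_half_pos (fun l => derivOp l G)
    (fun _ => G)
  simp only [weightedInner_comm _ (derivOp _ G) G, Finset.sum_const, Finset.card_univ,
    Fintype.card_fin, nsmul_eq_mul] at hboundary
  have hgrad := φ.sum_energy_derivOp_le (m + 1) G
  change _ = φ.dirichletEnergy (m + 1) G + _ at hgreen
  linarith [neg_abs_le (∑ l, weightedInner ((φ.evenPow (m + 1)).pderiv l) G (derivOp l G))]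

theorem exists_dirichletEnergy_le (c : ℝ) (m : ℕ) {ε : ℝ} (hε : 0 < ε) :
    ∃ K, 0 ≤ K ∧ ∀ (φ : Cutoff n c) (G : smoothFun n), φ.dirichletEnergy (m + 1) G ≤
      ε * φ.energy (m + 2) (shiftedOsc n G) + K * φ.energy m G := by
  refine ⟨1 / ε + n * (2 * (m + 2) * c) ^ 2, by positivity, fun φ G => ?_⟩
  have hpair := (le_abs_self _).trans
    (φ.abs_weightedInner_le m (half_pos hε) (shiftedOsc n G) G)
  have hK : 1 / (4 * (ε / 2)) = 1 / ε / 2 := by ring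
  rw [weightedInner_comm, hK] at hpair
  linarith [φ.dirichletEnergy_succ_le m G]

theorem exists_energy_shiftedOsc_le (c : ℝ) (m : ℕ) {ε : ℝ} (hε : 0 < ε) :
    ∃ K, 0 ≤ K ∧ ∀ (φ : Cutoff n c) (G : smoothFun n), φ.energy (m + 1) (shiftedOsc n G) ≤
      ε * φ.dirichletEnergy (m + 2) (shiftedOsc n G) + K * φ.dirichletEnergy m G := by
  set δ : ℝ := 1 / (2 * (n + 1)) with hδ
  set κ : ℝ := (2 * (m + 2) * c) ^ 2 / (4 * δ) with hκ
  refine ⟨1 / ε + 2 * κ, by positivity, fun φ G => ?_⟩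
  have hgreen := weightedInner_shiftedOsc_right (φ.evenPow (m + 1)) (shiftedOsc n G) G
  have hform := (le_abs_self _).trans
    (φ.abs_dirichletForm_le m (half_pos hε) (shiftedOsc n G) G)
  have hboundary := (le_abs_self _).trans <| φ.abs_sum_weightedInner_pderiv_le m
    (show 0 < δ by positivity) (fun _ => shiftedOsc n G) (fun l => derivOp l G)
  have hgrad : κ * _ ≤ κ * _ :=
    mul_le_mul_of_nonneg_left (φ.sum_energy_derivOp_le m G) (by positivity)
  have habsorb : δ * (n * φ.energy (m + 1) (shiftedOsc n G)) ≤
      1 / 2 * φ.energy (m + 1) (shiftedOsc n G) := by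
    rw [← mul_assoc]
    refine mul_le_mul_of_nonneg_right ?_ (φ.energy_nonneg _ _)
    rw [hδ, one_div_mul_eq_div, div_le_iff₀ (by positivity)]
    linarith
  have hK : 1 / (4 * (ε / 2)) = 1 / ε / 2 := by ring
  rw [hK] at hform
  simp only [Finset.sum_const, Finset.card_univ, Fintype.card_fin, nsmul_eq_mul, ← hκ] at hboundary
  change φ.energy (m + 1) (shiftedOsc n G) = _ at hgreen
  linarith

theorem Cutoff.abs_sum_weightedInner_weylOp_swap_le (φ : Cutoff n c) (m : ℕ) (F : smoothFun n) :
    |∑ i, weightedInner (φ.evenPow (m + 1)) (weylOp i F) (weylOp (Sum.swap i) F)| ≤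
      2 * φ.dirichletEnergy m F := by
  have hpair (i : Fin n ⊕ Fin n) :
      |weightedInner (φ.evenPow (m + 1)) (weylOp i F) (weylOp i.swap F)| ≤
        φ.energy m (weylOp i F) + φ.energy m (weylOp i.swap F) := by
    have h := φ.abs_weightedInner_le m one_pos (weylOp i F) (weylOp i.swap F)
    linarith [φ.energy_anti (show m ≤ m + 2 by omega) (weylOp i F),
      φ.energy_nonneg m (weylOp i.swap F)]
  have hswap : ∑ i : Fin n ⊕ Fin n, φ.energy m (weylOp i.swap F) = ∑ i, φ.energy m (weylOp i F) :=
    (Equiv.sumComm _ _).sum_comp fun i => φ.energy m (weylOp i F)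
  calc _ ≤ ∑ i, (φ.energy m (weylOp i F) + φ.energy m (weylOp i.swap F)) :=
        (Finset.abs_sum_le_sum_abs _ _).trans (Finset.sum_le_sum fun i _ => hpair i)
    _ = 2 * ∑ i, φ.energy m (weylOp i F) := by
        rw [Finset.sum_add_distrib, hswap, two_mul]
    _ ≤ 2 * φ.dirichletEnergy m F := by
        gcongr
        exact φ.sum_energy_weylOp_le m F

theorem Cutoff.sum_weightedInner_weylOp_shiftedOsc_le (φ : Cutoff n c) (m : ℕ) (F : smoothFun n) :
    ∑ i, weightedInner (φ.evenPow (m + 1)) (weylOp i F) (weylOp i (shiftedOsc n F)) ≤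
      (1 + 2 * n) * φ.energy m (shiftedOsc n F) +
        (1 + (2 * (m + 2) * c) ^ 2) * φ.dirichletEnergy m F := by
  set κ : ℝ := (2 * (m + 2) * c) ^ 2
  have hform : ∑ i, weightedInner (φ.evenPow (m + 1)) (weylOp i F) (weylOp i (shiftedOsc n F)) =
      dirichletForm (φ.evenPow (m + 1)) (shiftedOsc n F) F -
        n * weightedInner (φ.evenPow (m + 1)) F (shiftedOsc n F) := by
    rw [dirichletForm_comm, dirichletForm, add_sub_cancel_right]
  have hgreen : φ.energy (m + 1) (shiftedOsc n F) = _ :=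
    weightedInner_shiftedOsc_right (φ.evenPow (m + 1)) (shiftedOsc n F) F
  have hboundary := φ.abs_sum_weightedInner_pderiv_le m one_pos (fun _ => shiftedOsc n F)
    (fun l => derivOp l F)
  simp only [Finset.sum_const, Finset.card_univ, Fintype.card_fin, nsmul_eq_mul] at hboundary
  have hgrad : κ / 4 * _ ≤ κ / 4 * _ :=
    mul_le_mul_of_nonneg_left (φ.sum_energy_derivOp_le m F) (by positivity)
  have hpair := neg_le_of_abs_le (φ.abs_weightedInner_le m one_pos F (shiftedOsc n F))
  have hpair' := mul_le_mul_of_nonneg_left hpair n.cast_nonneg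
  have hself : n * φ.energy (m + 2) F ≤ φ.dirichletEnergy m F :=
    (mul_le_mul_of_nonneg_left (φ.energy_anti (by omega) F) n.cast_nonneg).trans
      (le_add_of_nonneg_left (Finset.sum_nonneg fun _ _ => φ.energy_nonneg _ _))
  have hosc := φ.energy_anti (show m ≤ m + 1 by omega) (shiftedOsc n F)
  have hosc' := mul_le_mul_of_nonneg_left hosc n.cast_nonneg
  have hnonneg : 0 ≤ n * φ.energy m (shiftedOsc n F) ∧ 0 ≤ κ * φ.dirichletEnergy m F :=
    ⟨mul_nonneg n.cast_nonneg (φ.energy_nonneg _ _),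
      mul_nonneg (by positivity) (φ.dirichletEnergy_nonneg _ _)⟩
  rw [hform]
  linarith [neg_le_of_abs_le hboundary]

theorem exists_sum_dirichletEnergy_weylOp_le (n : ℕ) (c : ℝ) (m : ℕ) :
    ∃ K, 0 ≤ K ∧ ∀ (φ : Cutoff n c) (F : smoothFun n),
      ∑ i, φ.dirichletEnergy (m + 1) (weylOp i F) ≤
        K * (φ.energy m (shiftedOsc n F) + φ.dirichletEnergy m F) := by
  set κ : ℝ := (2 * (m + 2) * c) ^ 2
  refine ⟨10 + 4 * n + (n + 2) * κ, by positivity, fun φ F => ?_⟩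
  have hcomm (i : Fin n ⊕ Fin n) : shiftedOsc n (weylOp i F) =
      weylOp i (shiftedOsc n F) - (weylOp i.swap F + weylOp i.swap F) := by
    rw [← Module.End.mul_apply, shiftedOsc_mul_weylOp, two_mul]
    rfl
  have hcaccioppoli : ∑ i, φ.dirichletEnergy (m + 1) (weylOp i F) ≤
      ∑ i, (2 * weightedInner (φ.evenPow (m + 1)) (weylOp i F) (shiftedOsc n (weylOp i F)) +
        n * κ * φ.energy m (weylOp i F)) :=
    Finset.sum_le_sum fun i _ => φ.dirichletEnergy_succ_le m (weylOp i F)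
  simp only [hcomm, map_sub, map_add, mul_sub, mul_add, Finset.sum_add_distrib,
    Finset.sum_sub_distrib, ← Finset.mul_sum] at hcaccioppoli
  have hmain := φ.sum_weightedInner_weylOp_shiftedOsc_le m F
  have hswap := neg_le_of_abs_le (φ.abs_sum_weightedInner_weylOp_swap_le m F)
  have hgrad : n * κ * _ ≤ n * κ * _ :=
    mul_le_mul_of_nonneg_left (φ.sum_energy_weylOp_le m F) (by positivity)
  have hnonneg : 0 ≤ (8 + (n + 2) * κ) * φ.energy m (shiftedOsc n F) ∧
      0 ≤ n * φ.dirichletEnergy m F :=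
    ⟨mul_nonneg (by positivity) (φ.energy_nonneg _ _),
      mul_nonneg n.cast_nonneg (φ.dirichletEnergy_nonneg _ _)⟩
  linarith

end EnergyEstimates

/-- The inequality between consecutive terms expresses approximate log-convexity; it propagates to
the endpoints with a loss in the constant. -/
theorem exists_le_add_of_forall_succ_le {ι : Type*} {b : ι → ℕ → ℝ} (hb : ∀ p j, 0 ≤ b p j)
    (h : ∀ j (ε : ℝ), 0 < ε → ∃ K, 0 ≤ K ∧ ∀ p, b p (j + 1) ≤ ε * b p (j + 2) + K * b p j)
    {j m : ℕ} (hj : j ≤ m) : ∃ K, 0 ≤ K ∧ ∀ p, b p j ≤ K * (b p m + b p 0) := by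
  have hstep (m : ℕ) (ε : ℝ) (hε : 0 < ε) :
      ∃ K, 0 ≤ K ∧ ∀ p, b p m ≤ ε * b p (m + 1) + K * b p 0 := by
    induction m generalizing ε with
    | zero => exact ⟨1, zero_le_one, fun p => by nlinarith [hb p 1]⟩
    | succ m ih =>
      obtain ⟨K, hK0, hK⟩ := h m (ε / 2) (half_pos hε)
      obtain ⟨K', hK'0, hK'⟩ := ih (1 / (2 * (K + 1))) (by positivity)
      refine ⟨2 * (K * K'), by positivity, fun p => ?_⟩
      have hprev := mul_le_mul_of_nonneg_left (hK' p) hK0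
      have habsorb : K * (1 / (2 * (K + 1)) * b p (m + 1)) ≤ 1 / 2 * b p (m + 1) := by
        rw [← mul_assoc]
        refine mul_le_mul_of_nonneg_right ?_ (hb p _)
        rw [mul_one_div, div_le_iff₀ (by positivity)]
        linarith
      linarith [hK p]
  induction m, hj using Nat.le_induction with
  | base => exact ⟨1, zero_le_one, fun p => by linarith [hb p 0]⟩
  | succ m _ ih =>
    obtain ⟨K, hK0, hK⟩ := ih
    obtain ⟨K', hK'0, hK'⟩ := hstep m 1 one_pos
    refine ⟨K * (1 + K'), by positivity, fun p => ?_⟩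
    have hprev := mul_le_mul_of_nonneg_left (hK' p) hK0
    have hterm : 0 ≤ K * K' * b p (m + 1) := mul_nonneg (by positivity) (hb p _)
    linarith [hK p]

/-! ### Elliptic regularity -/

section EllipticRegularity

variable {n : ℕ}

theorem shiftedOsc_pow_mem_smoothL2 {f : smoothFun n} {j k : ℕ} (hj : j ≤ k)
    (hf : f ∈ smoothL2 n) (hk : (shiftedOsc n ^ k) f ∈ smoothL2 n) :
    (shiftedOsc n ^ j) f ∈ smoothL2 n := by
  obtain ⟨c, hc⟩ := exists_mem_smoothL2_of_energy_le n
  let b (φ : Cutoff n c) (i : ℕ) : ℝ :=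
    if Even i then φ.energy i ((shiftedOsc n ^ (i / 2)) f)
    else φ.dirichletEnergy i ((shiftedOsc n ^ (i / 2)) f)
  have hb (φ : Cutoff n c) (i : ℕ) : 0 ≤ b φ i := by
    unfold b
    split_ifs
    exacts [φ.energy_nonneg _ _, φ.dirichletEnergy_nonneg _ _]
  have heven (φ : Cutoff n c) (a : ℕ) : b φ (2 * a) = φ.energy (2 * a) ((shiftedOsc n ^ a) f) := by
    simp [b]
  have hodd (φ : Cutoff n c) (a : ℕ) :
      b φ (2 * a + 1) = φ.dirichletEnergy (2 * a + 1) ((shiftedOsc n ^ a) f) := by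
    simp [b, Nat.add_div]
  have hstep (i : ℕ) (ε : ℝ) (hε : 0 < ε) :
      ∃ K, 0 ≤ K ∧ ∀ φ, b φ (i + 1) ≤ ε * b φ (i + 2) + K * b φ i := by
    obtain ⟨a, rfl | rfl⟩ := i.even_or_odd'
    · obtain ⟨K, hK0, hK⟩ := exists_dirichletEnergy_le (n := n) c (2 * a) hε
      refine ⟨K, hK0, fun φ => ?_⟩
      rw [show 2 * a + 2 = 2 * (a + 1) by ring, hodd, heven, heven, pow_succ', Module.End.mul_apply]
      exact hK φ _
    · obtain ⟨K, hK0, hK⟩ := exists_energy_shiftedOsc_le (n := n) c (2 * a + 1) hε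
      refine ⟨K, hK0, fun φ => ?_⟩
      rw [show 2 * a + 1 + 1 = 2 * (a + 1) by ring, show 2 * a + 1 + 2 = 2 * (a + 1) + 1 by ring,
        hodd, hodd, heven, pow_succ', Module.End.mul_apply]
      exact hK φ _
  obtain ⟨K, hK0, hK⟩ := exists_le_add_of_forall_succ_le hb hstep (Nat.mul_le_mul_left 2 hj)
  refine hc (2 * j) _ (K * ((∫ x, ‖((shiftedOsc n ^ k) f).1 x‖ ^ 2) + ∫ x, ‖f.1 x‖ ^ 2)) fun φ =>
    (heven φ j).symm.trans_le ((hK φ).trans ?_)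
  rw [heven φ k, ← mul_zero 2, heven φ 0]
  exact mul_le_mul_of_nonneg_left
    (add_le_add (φ.energy_le_integral _ hk) (φ.energy_le_integral _ hf)) hK0

theorem mem_shubinSobolev_two {f : smoothFun n} (hf : f ∈ smoothL2 n)
    (hPf : shiftedOsc n f ∈ smoothL2 n) : f ∈ shubinSobolev n 2 := by
  obtain ⟨c, hc⟩ := exists_mem_smoothL2_of_energy_le n
  obtain ⟨K, hK0, hK⟩ := exists_dirichletEnergy_le (n := n) c 0 one_pos
  obtain ⟨K', hK'0, hK'⟩ := exists_sum_dirichletEnergy_weylOp_le n c 1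
  set A : ℝ := 1 * (∫ x, ‖(shiftedOsc n f).1 x‖ ^ 2) + K * ∫ x, ‖f.1 x‖ ^ 2
  have hfirst (φ : Cutoff n c) : φ.dirichletEnergy 1 f ≤ A :=
    (hK φ f).trans <| add_le_add
      (mul_le_mul_of_nonneg_left (φ.energy_le_integral _ hPf) zero_le_one)
      (mul_le_mul_of_nonneg_left (φ.energy_le_integral _ hf) hK0)
  have hsecond (φ : Cutoff n c) : ∑ i, φ.dirichletEnergy 2 (weylOp i f) ≤
      K' * ((∫ x, ‖(shiftedOsc n f).1 x‖ ^ 2) + A) :=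
    (hK' φ f).trans <|
      mul_le_mul_of_nonneg_left (add_le_add (φ.energy_le_integral _ hPf) (hfirst φ)) hK'0
  have henergy (φ : Cutoff n c) (m : ℕ) (F : smoothFun n) (i : Fin n ⊕ Fin n) :
      φ.energy m (weylOp i F) ≤ φ.dirichletEnergy m F :=
    (Finset.single_le_sum (f := fun i => φ.energy m (weylOp i F))
      (fun _ _ => φ.energy_nonneg _ _) (Finset.mem_univ i)).trans (φ.sum_energy_weylOp_le m F)
  have hweyl (i : Fin n ⊕ Fin n) : weylOp i f ∈ smoothL2 n :=
    hc 1 _ A fun φ => (henergy φ 1 f i).trans (hfirst φ)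
  have hweyl_weyl (i j : Fin n ⊕ Fin n) : weylOp j (weylOp i f) ∈ smoothL2 n :=
    hc 2 _ _ fun φ => (henergy φ 2 _ j).trans <|
      (Finset.single_le_sum (f := fun i => φ.dirichletEnergy 2 (weylOp i f))
        (fun _ _ => φ.dirichletEnergy_nonneg _ _) (Finset.mem_univ i)).trans (hsecond φ)
  exact mem_shubinSobolev_succ.2 ⟨mem_shubinSobolev_succ.2 ⟨hf, hweyl⟩,
    fun i => mem_shubinSobolev_succ.2 ⟨hweyl i, hweyl_weyl i⟩⟩

theorem mem_shubinSobolev_add_two {m : ℕ} {f : smoothFun n} (hf : f ∈ shubinSobolev n m)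
    (hPf : shiftedOsc n f ∈ shubinSobolev n m) : f ∈ shubinSobolev n (m + 2) := by
  induction m generalizing f with
  | zero => exact mem_shubinSobolev_two hf hPf
  | succ m ih =>
    rw [mem_shubinSobolev_succ] at hf hPf
    refine mem_shubinSobolev_succ.2 ⟨ih hf.1 hPf.1, fun i => ih (hf.2 i) ?_⟩
    rw [← Module.End.mul_apply, shiftedOsc_mul_weylOp, two_mul]
    exact sub_mem (hPf.2 i) (add_mem (hf.2 i.swap) (hf.2 i.swap))

theorem mem_shubinSobolev_of_forall_pow_mem {k : ℕ} {f : smoothFun n}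
    (h : ∀ j ≤ k, (shiftedOsc n ^ j) f ∈ smoothL2 n) : f ∈ shubinSobolev n (2 * k) := by
  induction k generalizing f with
  | zero => exact h 0 le_rfl
  | succ k ih =>
    refine mem_shubinSobolev_add_two (ih fun j hj => h j (by omega)) (ih fun j hj => ?_)
    rw [← Module.End.mul_apply, ← pow_succ]
    exact h (j + 1) (by omega)

theorem mem_shubinSobolev_of_pow_mem {k : ℕ} {f : smoothFun n} (hf : f ∈ smoothL2 n)
    (hk : (shiftedOsc n ^ k) f ∈ smoothL2 n) : f ∈ shubinSobolev n (2 * k) :=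
  mem_shubinSobolev_of_forall_pow_mem fun _ hj => shiftedOsc_pow_mem_smoothL2 hj hf hk

end EllipticRegularity

/-! ### The operators `x^α ∂^β` -/

section MultiIndices

theorem sum_add_single {ι : Type*} [Fintype ι] [DecidableEq ι] (α : ι → ℕ) (j : ι) :
    ∑ i, (α + Pi.single j 1 : ι → ℕ) i = ∑ i, α i + 1 := by
  simp [Finset.sum_add_distrib]

theorem sub_single_add_single {ι : Type*} [DecidableEq ι] {α : ι → ℕ} {j : ι} (hj : α j ≠ 0) :
    α - Pi.single j 1 + Pi.single j 1 = α := by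
  ext i
  rcases eq_or_ne i j with rfl | hij
  · simp only [Pi.add_apply, Pi.sub_apply, Pi.single_eq_same]
    omega
  · simp [hij]

theorem sum_sub_single {ι : Type*} [Fintype ι] [DecidableEq ι] {α : ι → ℕ} {j : ι}
    (hj : α j ≠ 0) : ∑ i, (α - Pi.single j 1 : ι → ℕ) i + 1 = ∑ i, α i := by
  rw [← sum_add_single, sub_single_add_single hj]

theorem multiIndex_induction {ι : Type*} [Finite ι] [DecidableEq ι] {p : (ι → ℕ) → Prop}
    (zero : p 0) (add_single : ∀ α j, p α → p (α + Pi.single j 1)) (α : ι → ℕ) : p α := by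
  cases nonempty_fintype ι
  induction hm : ∑ i, α i generalizing α with
  | zero =>
    obtain rfl : α = 0 := funext fun i => Finset.sum_eq_zero_iff.1 hm i (Finset.mem_univ i)
    exact zero
  | succ m ih =>
    obtain ⟨j, -, hj⟩ : ∃ j ∈ Finset.univ, α j ≠ 0 :=
      Finset.exists_ne_zero_of_sum_ne_zero (by omega)
    rw [← sub_single_add_single hj]
    exact add_single _ j (ih _ (by have := sum_sub_single hj; omega))

theorem mul_prod_map_pow {M ι : Type*} [Monoid M] [DecidableEq ι] {a : ι → M}
    (ha : ∀ i j, Commute (a i) (a j)) {l : List ι} (hl : l.Nodup) {j : ι} (hj : j ∈ l)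
    (β : ι → ℕ) :
    a j * (l.map fun i => a i ^ β i).prod =
      (l.map fun i => a i ^ (β + Pi.single j 1 : ι → ℕ) i).prod := by
  induction l with
  | nil => simp at hj
  | cons i l ih =>
    rw [List.nodup_cons] at hl
    rw [List.map_cons, List.map_cons, List.prod_cons, List.prod_cons]
    rcases eq_or_ne j i with rfl | hji
    · have htail : (l.map fun i => a i ^ (β + Pi.single j 1 : ι → ℕ) i) =
          l.map fun i => a i ^ β i :=
        List.map_congr_left fun i hi => by simp [ne_of_mem_of_not_mem hi hl.1]
      rw [htail, ← mul_assoc, ← pow_succ', Pi.add_apply, Pi.single_eq_same]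
    · rw [← mul_assoc, ((ha j i).pow_right _).eq, mul_assoc,
        ih hl.2 ((List.mem_cons.1 hj).resolve_left hji)]
      simp [hji.symm]

variable {n : ℕ}

theorem monomial_add_single (α : Fin n → ℕ) (j : Fin n) (x : En n) :
    monomial n (α + Pi.single j 1) x = x j * monomial n α x := by
  simp only [monomial, Pi.add_apply, pow_add, Finset.prod_mul_distrib, Pi.single_apply, pow_ite,
    pow_one, pow_zero, Finset.prod_ite_eq', Finset.mem_univ, if_true]
  exact mul_comm _ _

theorem contDiff_monomial (α : Fin n → ℕ) : ContDiff ℝ (⊤ : ℕ∞) (monomial n α) :=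
  contDiff_prod fun i _ => (contDiff_coord i).pow _

theorem pderivReal_monomial (j : Fin n) (α : Fin n → ℕ) (x : En n) :
    pderivReal j (monomial n α) x = α j * monomial n (α - Pi.single j 1) x := by
  have hcoord (i : Fin n) : HasFDerivAt (fun y : En n => y i) _ x :=
    (EuclideanSpace.proj (𝕜 := ℝ) i).hasFDerivAt
  have hprod : HasFDerivAt (monomial n α) _ x :=
    HasFDerivAt.finsetProd (u := Finset.univ) (g := fun (i : Fin n) (y : En n) => y i ^ α i)
      fun i _ => (hcoord i).pow (α i)
  have herase : ∏ i ∈ Finset.univ.erase j, x i ^ α i =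
      ∏ i ∈ Finset.univ.erase j, x i ^ (α - Pi.single j 1 : Fin n → ℕ) i :=
    Finset.prod_congr rfl fun i hi => by simp [Finset.ne_of_mem_erase hi]
  rw [pderivReal, hprod.fderiv, monomial, ← Finset.mul_prod_erase _ _ (Finset.mem_univ j), ← herase,
    _root_.sum_apply, Finset.sum_eq_single_of_mem j (Finset.mem_univ j)]
  · simp
    ring
  · intro i _ hij
    simp [hij]

theorem coordOp_mul_mulOp_monomial (j : Fin n) (α : Fin n → ℕ) :
    coordOp j * mulOp (monomial n α) (contDiff_monomial α) =
      mulOp (monomial n (α + Pi.single j 1)) (contDiff_monomial _) := by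
  ext f x
  simp [monomial_add_single, mul_assoc]

theorem derivOp_mul_mulOp_monomial (j : Fin n) (α : Fin n → ℕ) :
    derivOp j * mulOp (monomial n α) (contDiff_monomial α) =
      mulOp (monomial n α) (contDiff_monomial α) * derivOp j +
        α j • mulOp (monomial n (α - Pi.single j 1)) (contDiff_monomial _) := by
  rw [derivOp_mul_mulOp]
  congr 1
  ext f x
  simp [pderivReal_monomial, mul_assoc]

/-- The operator `∂^β` on smooth functions. -/
def derivMulti (β : Fin n → ℕ) : Module.End ℂ (smoothFun n) :=
  ((List.finRange n).map fun j => derivOp j ^ β j).prod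

theorem derivMulti_apply (β : Fin n → ℕ) (f : smoothFun n) :
    (derivMulti β f : En n → ℂ) = pderivMulti β f := by
  have hpow (j : Fin n) (b : ℕ) (g : smoothFun n) :
      ((derivOp j ^ b) g : En n → ℂ) = (pderiv1 j)^[b] g := by
    induction b with
    | zero => rfl
    | succ b ih => rw [Function.iterate_succ_apply', ← ih, pow_succ', Module.End.mul_apply,
        derivOp_apply]
  unfold derivMulti pderivMulti
  induction List.finRange n with
  | nil => rfl
  | cons j l ih =>
    rw [List.map_cons, List.prod_cons, Module.End.mul_apply, hpow, ih, List.foldr_cons]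

theorem derivMulti_zero : derivMulti (0 : Fin n → ℕ) = 1 :=
  List.prod_eq_one fun _ h => by
    obtain ⟨j, -, rfl⟩ := List.mem_map.1 h
    rfl

theorem derivOp_mul_derivMulti (j : Fin n) (β : Fin n → ℕ) :
    derivOp j * derivMulti β = derivMulti (β + Pi.single j 1) :=
  mul_prod_map_pow derivOp_comm (List.nodup_finRange n) (List.mem_finRange j) β

/-- The operator `x^α ∂^β` on smooth functions. -/
def monomialDeriv (α β : Fin n → ℕ) : Module.End ℂ (smoothFun n) :=
  mulOp (monomial n α) (contDiff_monomial α) * derivMulti β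

theorem monomialDeriv_apply (α β : Fin n → ℕ) (f : smoothFun n) :
    (monomialDeriv α β f : En n → ℂ) = fun x => (monomial n α x : ℂ) * pderivMulti β f x := by
  rw [← derivMulti_apply]
  rfl

theorem monomialDeriv_zero_zero : monomialDeriv (0 : Fin n → ℕ) 0 = 1 := by
  rw [monomialDeriv, derivMulti_zero, mul_one]
  ext f x
  simp [monomial]

theorem coordOp_mul_monomialDeriv (j : Fin n) (α β : Fin n → ℕ) :
    coordOp j * monomialDeriv α β = monomialDeriv (α + Pi.single j 1) β := by
  rw [monomialDeriv, ← mul_assoc, coordOp_mul_mulOp_monomial, monomialDeriv]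

theorem derivOp_mul_monomialDeriv (j : Fin n) (α β : Fin n → ℕ) :
    derivOp j * monomialDeriv α β =
      monomialDeriv α (β + Pi.single j 1) + α j • monomialDeriv (α - Pi.single j 1) β := by
  simp only [monomialDeriv, ← derivOp_mul_derivMulti]
  rw [← mul_assoc, derivOp_mul_mulOp_monomial, add_mul, mul_assoc, smul_mul_assoc]

theorem shiftedOsc_mul_monomialDeriv (α β : Fin n → ℕ) :
    shiftedOsc n * monomialDeriv α β = ∑ j, (monomialDeriv (α + Pi.single j 1 + Pi.single j 1) β -
      monomialDeriv α (β + Pi.single j 1 + Pi.single j 1) -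
      (2 * α j) • monomialDeriv (α - Pi.single j 1) (β + Pi.single j 1) -
      (α j * (α - Pi.single j 1 : Fin n → ℕ) j) •
        monomialDeriv (α - Pi.single j 1 - Pi.single j 1) β +
      monomialDeriv α β) := by
  rw [shiftedOsc, Finset.sum_mul]
  refine Finset.sum_congr rfl fun j _ => ?_
  simp only [add_mul, sub_mul, pow_two, mul_assoc, one_mul, coordOp_mul_monomialDeriv,
    derivOp_mul_monomialDeriv, mul_add, mul_smul_comm, smul_add, smul_smul, two_mul, add_smul]
  abel

theorem monomialDeriv_mem_shubinSobolev {α β : Fin n → ℕ} {p : ℕ} {f : smoothFun n}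
    (hf : f ∈ shubinSobolev n (p + (∑ j, α j + ∑ j, β j))) :
    monomialDeriv α β f ∈ shubinSobolev n p := by
  induction α using multiIndex_induction generalizing p with
  | zero =>
    induction β using multiIndex_induction generalizing p with
    | zero => simpa [monomialDeriv_zero_zero] using hf
    | add_single β j ih =>
      have hcomm : monomialDeriv 0 (β + Pi.single j 1) = derivOp j * monomialDeriv 0 β := by
        simp [derivOp_mul_monomialDeriv]
      rw [hcomm]
      refine (mem_shubinSobolev_succ.1 (ih (p := p + 1) ?_)).2 (Sum.inl j)
      rwa [sum_add_single, ← add_assoc (∑ j, _), add_comm _ 1, ← add_assoc] at hf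
  | add_single α j ih =>
    rw [← coordOp_mul_monomialDeriv]
    refine (mem_shubinSobolev_succ.1 (ih (p := p + 1) ?_)).2 (Sum.inr j)
    rwa [sum_add_single, add_right_comm, add_comm _ 1, ← add_assoc] at hf

end MultiIndices

section OscillatorNorms

variable {n : ℕ}

/-- The extended `L²` norm of `(H + n)^k f`; it is `∞` when this function is not in `L²`. -/
def oscNorm (k : ℕ) (f : smoothFun n) : ℝ≥0∞ :=
  eLpNorm ((shiftedOsc n ^ k) f : En n → ℂ) 2 volume

theorem aestronglyMeasurable_smoothFun (f : smoothFun n) :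
    AEStronglyMeasurable (f : En n → ℂ) volume :=
  (contDiff_smoothFun f).continuous.aestronglyMeasurable

theorem oscNorm_succ (k : ℕ) (f : smoothFun n) :
    oscNorm (k + 1) f = oscNorm k (shiftedOsc n f) := by
  rw [oscNorm, pow_succ, Module.End.mul_apply, oscNorm]

theorem oscNorm_add_le (k : ℕ) (f g : smoothFun n) :
    oscNorm k (f + g) ≤ oscNorm k f + oscNorm k g := by
  unfold oscNorm
  rw [map_add]
  exact eLpNorm_add_le (aestronglyMeasurable_smoothFun _) (aestronglyMeasurable_smoothFun _)
    one_le_two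

theorem oscNorm_sub_le (k : ℕ) (f g : smoothFun n) :
    oscNorm k (f - g) ≤ oscNorm k f + oscNorm k g := by
  unfold oscNorm
  rw [map_sub]
  exact eLpNorm_sub_le (aestronglyMeasurable_smoothFun _) (aestronglyMeasurable_smoothFun _)
    one_le_two

theorem oscNorm_zero (k : ℕ) : oscNorm k (0 : smoothFun n) = 0 := by
  unfold oscNorm
  rw [map_zero]
  exact eLpNorm_zero

theorem oscNorm_sum_le {ι : Type*} (k : ℕ) (s : Finset ι) (f : ι → smoothFun n) :
    oscNorm k (∑ i ∈ s, f i) ≤ ∑ i ∈ s, oscNorm k (f i) :=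
  Finset.le_sum_of_subadditive (oscNorm k) (oscNorm_zero k).le (oscNorm_add_le k) s f

theorem oscNorm_nsmul (k b : ℕ) (f : smoothFun n) : oscNorm k (b • f) = b * oscNorm k f := by
  have hb : ‖(b : ℂ)‖ₑ = b := by
    rw [← ofReal_norm, Complex.norm_natCast, ENNReal.ofReal_natCast]
  unfold oscNorm
  rw [map_nsmul, ← Nat.cast_smul_eq_nsmul ℂ, ← hb]
  exact eLpNorm_const_smul (b : ℂ) _ 2 volume

variable {k : ℕ} {u : smoothFun n} {G : ℕ → ℝ≥0∞}

theorem mul_oscNorm_monomialDeriv_sub_single_le (hG : ∀ q b : ℕ, b ≤ q + 1 → b * G q ≤ G (q + 2))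
    (hu : ∀ α β, oscNorm k (monomialDeriv α β u) ≤ G (∑ j, α j + ∑ j, β j))
    (α β : Fin n → ℕ) (j : Fin n) :
    α j * oscNorm k (monomialDeriv (α - Pi.single j 1) β u) ≤ G (∑ j, α j + ∑ j, β j + 1) := by
  by_cases hj : α j = 0
  · simp [hj]
  have hsum := sum_sub_single hj
  have hle : α j ≤ ∑ i, α i := Finset.single_le_sum (fun _ _ => Nat.zero_le _) (Finset.mem_univ j)
  calc (α j : ℝ≥0∞) * oscNorm k (monomialDeriv (α - Pi.single j 1) β u)
      ≤ α j * G (∑ i, (α - Pi.single j 1 : Fin n → ℕ) i + ∑ i, β i) := by gcongr; exact hu _ _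
    _ ≤ G (∑ i, (α - Pi.single j 1 : Fin n → ℕ) i + ∑ i, β i + 2) := hG _ _ (by omega)
    _ = G (∑ j, α j + ∑ j, β j + 1) := by congr 1; omega

theorem oscNorm_succ_monomialDeriv_le (hG : ∀ q b : ℕ, b ≤ q + 1 → b * G q ≤ G (q + 2))
    (hu : ∀ α β, oscNorm k (monomialDeriv α β u) ≤ G (∑ j, α j + ∑ j, β j)) (α β : Fin n → ℕ) :
    oscNorm (k + 1) (monomialDeriv α β u) ≤ 6 * n * G (∑ j, α j + ∑ j, β j + 2) := by
  set B := G (∑ j, α j + ∑ j, β j + 2)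
  have hcoord (j : Fin n) :
      oscNorm k (monomialDeriv (α + Pi.single j 1 + Pi.single j 1) β u) ≤ B := by
    refine (hu _ _).trans_eq (congrArg G ?_)
    rw [sum_add_single, sum_add_single]
    omega
  have hderiv (j : Fin n) :
      oscNorm k (monomialDeriv α (β + Pi.single j 1 + Pi.single j 1) u) ≤ B := by
    refine (hu _ _).trans_eq (congrArg G ?_)
    rw [sum_add_single, sum_add_single]
    omega
  have hmixed (j : Fin n) :
      oscNorm k ((2 * α j) • monomialDeriv (α - Pi.single j 1) (β + Pi.single j 1) u) ≤ 2 * B := by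
    rw [oscNorm_nsmul, Nat.cast_mul, mul_assoc, Nat.cast_ofNat]
    gcongr
    refine (mul_oscNorm_monomialDeriv_sub_single_le hG hu _ _ j).trans_eq (congrArg G ?_)
    rw [sum_add_single]
    omega
  have hlower (j : Fin n) : oscNorm k ((α j * (α - Pi.single j 1 : Fin n → ℕ) j) •
      monomialDeriv (α - Pi.single j 1 - Pi.single j 1) β u) ≤ B := by
    by_cases hj : α j = 0
    · simp [hj, oscNorm_zero]
    have hsum := sum_sub_single hj
    have hle : α j ≤ ∑ i, α i := Finset.single_le_sum (fun _ _ => Nat.zero_le _) (Finset.mem_univ j)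
    rw [oscNorm_nsmul, Nat.cast_mul, mul_assoc]
    refine le_trans ?_ (hG (∑ j, α j + ∑ j, β j) (α j) (by omega))
    gcongr
    refine (mul_oscNorm_monomialDeriv_sub_single_le hG hu _ _ j).trans_eq (congrArg G ?_)
    omega
  have hself : oscNorm k (monomialDeriv α β u) ≤ B :=
    (hu α β).trans (by simpa using hG (∑ j, α j + ∑ j, β j) 1 (by omega))
  rw [oscNorm_succ, ← Module.End.mul_apply, shiftedOsc_mul_monomialDeriv, LinearMap.sum_apply]
  calc oscNorm k (∑ j, _) ≤ ∑ j : Fin n, (B + B + 2 * B + B + B) := by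
        refine (oscNorm_sum_le k _ _).trans (Finset.sum_le_sum fun j _ => ?_)
        refine (oscNorm_add_le _ _ _).trans (add_le_add ?_ hself)
        refine (oscNorm_sub_le _ _ _).trans (add_le_add ?_ (hlower j))
        refine (oscNorm_sub_le _ _ _).trans (add_le_add ?_ (hmixed j))
        exact (oscNorm_sub_le _ _ _).trans (add_le_add (hcoord j) (hderiv j))
    _ = 6 * n * B := by
        rw [Finset.sum_const, Finset.card_univ, Fintype.card_fin, nsmul_eq_mul]
        ring

theorem oscNorm_monomialDeriv_le (hG : ∀ q b : ℕ, b ≤ q + 1 → b * G q ≤ G (q + 2))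
    (hu : ∀ α β, oscNorm 0 (monomialDeriv α β u) ≤ G (∑ j, α j + ∑ j, β j)) (k : ℕ)
    (α β : Fin n → ℕ) :
    oscNorm k (monomialDeriv α β u) ≤ (6 * n) ^ k * G (2 * k + (∑ j, α j + ∑ j, β j)) := by
  induction k generalizing α β with
  | zero => simpa using hu α β
  | succ k ih =>
    refine (oscNorm_succ_monomialDeriv_le (G := fun q => (6 * n) ^ k * G (2 * k + q))
      (fun q b hb => ?_) ih α β).trans_eq ?_
    · rw [mul_left_comm]
      gcongr
      exact hG (2 * k + q) b (by omega)
    · rw [← mul_assoc, ← pow_succ', show 2 * (k + 1) + (∑ j, α j + ∑ j, β j) =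
        2 * k + (∑ j, α j + ∑ j, β j + 2) by ring]

theorem L2norm_eq_toReal_eLpNorm {f : En n → ℂ} (hf : AEStronglyMeasurable f volume) :
    L2norm n f = (eLpNorm f 2 volume).toReal := by
  rw [toReal_eLpNorm hf, lpNorm_eq_integral_norm_rpow_toReal two_ne_zero ENNReal.ofNat_ne_top hf,
    L2norm, Real.sqrt_eq_rpow]
  norm_num

end OscillatorNorms

/-! ### Gelfand–Shilov bounds -/

section GelfandShilovBounds

/-- The bound `M r^q (q!)^σ` that Gelfand–Shilov estimates of index `σ` put on the functions
`x^α ∂^β u` with `|α| + |β| = q`. -/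
def gelfandShilovBound (M r σ : ℝ) (q : ℕ) : ℝ :=
  M * r ^ q * (q.factorial : ℝ) ^ σ

theorem gelfandShilovBound_nonneg {M r : ℝ} (hM : 0 ≤ M) (hr : 0 ≤ r) (σ : ℝ) (q : ℕ) :
    0 ≤ gelfandShilovBound M r σ q := by
  unfold gelfandShilovBound
  positivity

theorem natCast_le_rpow_of_sq_le {σ x : ℝ} (hσ : 1 / 2 ≤ σ) {b : ℕ} (hb : (b : ℝ) ^ 2 ≤ x) :
    (b : ℝ) ≤ x ^ σ := by
  rcases Nat.eq_zero_or_pos b with rfl | hpos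
  · rw [Nat.cast_zero]
    exact Real.rpow_nonneg ((sq_nonneg _).trans hb) σ
  have hone : (1 : ℝ) ≤ x := (one_le_pow₀ (Nat.one_le_cast.2 hpos)).trans hb
  calc (b : ℝ) = √((b : ℝ) ^ 2) := (Real.sqrt_sq b.cast_nonneg).symm
    _ ≤ √x := Real.sqrt_le_sqrt hb
    _ = x ^ (1 / 2 : ℝ) := Real.sqrt_eq_rpow x
    _ ≤ x ^ σ := Real.rpow_le_rpow_of_exponent_le hone hσ

theorem natCast_mul_gelfandShilovBound_le {M r σ : ℝ} (hM : 0 ≤ M) (hr : 1 ≤ r) (hσ : 1 / 2 ≤ σ)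
    {q b : ℕ} (hb : b ≤ q + 1) :
    b * gelfandShilovBound M r σ q ≤ gelfandShilovBound M r σ (q + 2) := by
  have hfactorial : ((q + 2).factorial : ℝ) = (q + 2) * (q + 1) * q.factorial := by
    rw [Nat.factorial_succ, Nat.factorial_succ]
    push_cast
    ring
  have hrpow : (b : ℝ) ≤ ((q + 2) * (q + 1) : ℝ) ^ σ := by
    have hbq : (b : ℝ) ≤ q + 1 := mod_cast hb
    exact natCast_le_rpow_of_sq_le hσ (by nlinarith)
  calc b * gelfandShilovBound M r σ q = M * r ^ q * (b * (q.factorial : ℝ) ^ σ) := by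
        rw [gelfandShilovBound]
        ring
    _ ≤ M * r ^ (q + 2) * (((q + 2) * (q + 1) : ℝ) ^ σ * (q.factorial : ℝ) ^ σ) := by
        gcongr
        omega
    _ = gelfandShilovBound M r σ (q + 2) := by
        rw [gelfandShilovBound, hfactorial,
          Real.mul_rpow (by positivity) (Nat.cast_nonneg q.factorial)]

theorem prod_factorial_rpow_mul_le {ι κ : Type*} [Fintype ι] [Fintype κ] (α : ι → ℕ) (β : κ → ℕ)
    {σ : ℝ} (hσ : 0 ≤ σ) :
    ((∏ i, (α i).factorial : ℕ) : ℝ) ^ σ * ((∏ i, (β i).factorial : ℕ) : ℝ) ^ σ ≤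
      ((∑ i, α i + ∑ i, β i).factorial : ℝ) ^ σ := by
  rw [← Real.mul_rpow (by positivity) (by positivity)]
  refine Real.rpow_le_rpow (by positivity) ?_ hσ
  have hdvd : (∏ i, (α i).factorial) * (∏ i, (β i).factorial) ∣
      (∑ i, α i + ∑ i, β i).factorial :=
    (mul_dvd_mul (Nat.prod_factorial_dvd_factorial_sum _ α)
      (Nat.prod_factorial_dvd_factorial_sum _ β)).trans
      (Nat.factorial_mul_factorial_dvd_factorial_add _ _)
  exact mod_cast Nat.le_of_dvd (Nat.factorial_pos _) hdvd

theorem factorial_two_mul_rpow_le (k : ℕ) {σ : ℝ} (hσ : 0 ≤ σ) :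
    ((2 * k).factorial : ℝ) ^ σ ≤ (4 ^ σ) ^ k * (k.factorial : ℝ) ^ (2 * σ) := by
  have hchoose : (2 * k).factorial ≤ 4 ^ k * k.factorial ^ 2 := by
    rw [← Nat.choose_mul_factorial_mul_factorial (show k ≤ 2 * k by omega), mul_assoc,
      show 2 * k - k = k by omega, ← pow_two]
    gcongr
    exact (Nat.choose_le_two_pow _ _).trans_eq (pow_mul 2 2 k)
  calc ((2 * k).factorial : ℝ) ^ σ ≤ (4 ^ k * (k.factorial : ℝ) ^ 2) ^ σ := by
        gcongr
        exact mod_cast hchoose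
    _ = (4 ^ σ) ^ k * (k.factorial : ℝ) ^ (2 * σ) := by
        rw [Real.mul_rpow (by positivity) (by positivity), ← Real.rpow_pow_comm (by norm_num),
          Real.rpow_mul (by positivity), Real.rpow_two]

variable {n : ℕ}

theorem eLpNorm_monomialDeriv_eq_ofReal {k : ℕ} {u : smoothFun n} (hu : u ∈ smoothL2 n)
    (hku : (shiftedOsc n ^ k) u ∈ smoothL2 n) {α β : Fin n → ℕ}
    (hαβ : ∑ j, α j + ∑ j, β j ≤ 2 * k) :
    eLpNorm (monomialDeriv α β u : En n → ℂ) 2 volume =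
      ENNReal.ofReal (L2norm n (monomialDeriv α β u)) := by
  have hmem : monomialDeriv α β u ∈ shubinSobolev n 0 :=
    monomialDeriv_mem_shubinSobolev <| shubinSobolev_antitone n (by omega)
      (mem_shubinSobolev_of_pow_mem hu hku)
  rw [L2norm_eq_toReal_eLpNorm (aestronglyMeasurable_smoothFun _),
    ENNReal.ofReal_toReal (MemLp.eLpNorm_ne_top hmem)]

theorem oscNorm_le_ofReal_gelfandShilovBound {k : ℕ} {u : smoothFun n} (hu : u ∈ smoothL2 n)
    (hku : (shiftedOsc n ^ k) u ∈ smoothL2 n) {M r σ : ℝ} (hM : 0 ≤ M) (hr : 1 ≤ r)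
    (hσ : 1 / 2 ≤ σ) (hbound : ∀ α β, L2norm n (monomialDeriv α β u) ≤
      gelfandShilovBound M r σ (∑ j, α j + ∑ j, β j)) :
    oscNorm k u ≤ ENNReal.ofReal ((6 * n) ^ k * gelfandShilovBound M r σ (2 * k)) := by
  -- Above order `2k` the functions `x^α ∂^β u` need not lie in `L²`, hence the value `∞`.
  let G (q : ℕ) : ℝ≥0∞ :=
    if q ≤ 2 * k then ENNReal.ofReal (gelfandShilovBound M r σ q) else ∞
  have hG (q b : ℕ) (hb : b ≤ q + 1) : b * G q ≤ G (q + 2) := by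
    by_cases hq : q + 2 ≤ 2 * k
    · simp only [G, if_pos hq, if_pos (show q ≤ 2 * k by omega)]
      rw [← ENNReal.ofReal_natCast, ← ENNReal.ofReal_mul b.cast_nonneg]
      exact ENNReal.ofReal_le_ofReal (natCast_mul_gelfandShilovBound_le hM hr hσ hb)
    · simp only [G, if_neg hq, le_top]
  have hGu (α β : Fin n → ℕ) : oscNorm 0 (monomialDeriv α β u) ≤ G (∑ j, α j + ∑ j, β j) := by
    by_cases hαβ : ∑ j, α j + ∑ j, β j ≤ 2 * k
    · simp only [G, if_pos hαβ]
      exact (eLpNorm_monomialDeriv_eq_ofReal hu hku hαβ).trans_le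
        (ENNReal.ofReal_le_ofReal (hbound α β))
    · simp only [G, if_neg hαβ, le_top]
  have hnorm := oscNorm_monomialDeriv_le hG hGu k 0 0
  simp only [monomialDeriv_zero_zero, Module.End.one_apply, Pi.zero_apply, Finset.sum_const_zero,
    add_zero, G, le_refl, if_true] at hnorm
  rwa [ENNReal.ofReal_mul (by positivity), ENNReal.ofReal_pow (by positivity),
    ENNReal.ofReal_mul (by norm_num), ENNReal.ofReal_natCast, ENNReal.ofReal_ofNat]

theorem L2norm_shiftedOsc_pow_le {u : smoothFun n} (hu : u ∈ smoothL2 n) {M r σ : ℝ} (hr : 1 ≤ r)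
    (hσ : 1 / 2 ≤ σ) (hbound : ∀ α β, L2norm n (monomialDeriv α β u) ≤
      gelfandShilovBound M r σ (∑ j, α j + ∑ j, β j)) (k : ℕ) :
    L2norm n ((shiftedOsc n ^ k) u) ≤ (6 * n) ^ k * gelfandShilovBound M r σ (2 * k) := by
  have hM : 0 ≤ M := by
    simpa [gelfandShilovBound] using (Real.sqrt_nonneg _).trans (hbound 0 0)
  have hnonneg : 0 ≤ (6 * n) ^ k * gelfandShilovBound M r σ (2 * k) :=
    mul_nonneg (by positivity) (gelfandShilovBound_nonneg hM (zero_le_one.trans hr) _ _)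
  have hmeas := aestronglyMeasurable_smoothFun ((shiftedOsc n ^ k) u)
  rw [L2norm_eq_toReal_eLpNorm hmeas]
  by_cases hku : (shiftedOsc n ^ k) u ∈ smoothL2 n
  · exact ENNReal.toReal_le_of_le_ofReal hnonneg
      (oscNorm_le_ofReal_gelfandShilovBound hu hku hM hr hσ hbound)
  · have htop : eLpNorm ((shiftedOsc n ^ k) u : En n → ℂ) 2 volume = ∞ :=
      not_lt_top_iff.1 fun hlt => hku ⟨hmeas, hlt⟩
    rwa [htop, ENNReal.toReal_top]

end GelfandShilovBounds

section Smoothing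

theorem gelfandShilovBound_div_rpow {t : ℝ} (ht : 0 < t) (A m₁ m₂ N σ : ℝ) (q : ℕ) :
    gelfandShilovBound (A / t ^ m₂ * N) (A / t ^ m₁) σ q =
      A ^ (1 + q) / t ^ (m₁ * q + m₂) * (q.factorial : ℝ) ^ σ * N := by
  rw [gelfandShilovBound, Real.rpow_add ht, Real.rpow_mul_natCast ht.le, div_pow, pow_add, pow_one]
  field_simp

theorem pow_mul_gelfandShilovBound_two_mul_le {A B C N m₁ m₂ σ t : ℝ} (hA : 0 ≤ A) (hB : 0 ≤ B)
    (hN : 0 ≤ N) (hσ : 0 ≤ σ) (ht : 0 < t) (hAC : A ≤ C) (hBC : B * 4 ^ σ * A ^ 2 ≤ C) (k : ℕ) :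
    B ^ k * gelfandShilovBound (A / t ^ m₂ * N) (A / t ^ m₁) σ (2 * k) ≤
      C ^ (1 + k) / t ^ (2 * m₁ * k + m₂) * (k.factorial : ℝ) ^ (2 * σ) * N := by
  have hexp : m₁ * (2 * k : ℕ) + m₂ = 2 * m₁ * k + m₂ := by
    push_cast
    ring
  rw [gelfandShilovBound_div_rpow ht, hexp]
  calc B ^ k * (A ^ (1 + 2 * k) / t ^ (2 * m₁ * k + m₂) * ((2 * k).factorial : ℝ) ^ σ * N)
      ≤ B ^ k * (A ^ (1 + 2 * k) / t ^ (2 * m₁ * k + m₂) *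
          ((4 ^ σ) ^ k * (k.factorial : ℝ) ^ (2 * σ)) * N) := by
        gcongr
        exact factorial_two_mul_rpow_le k hσ
    _ = A * (B * 4 ^ σ * A ^ 2) ^ k / t ^ (2 * m₁ * k + m₂) * (k.factorial : ℝ) ^ (2 * σ) * N := by
        rw [mul_pow, mul_pow, pow_add, pow_one, pow_mul]
        ring
    _ ≤ C * C ^ k / t ^ (2 * m₁ * k + m₂) * (k.factorial : ℝ) ^ (2 * σ) * N := by
        have hC : 0 ≤ C := hA.trans hAC
        gcongr
    _ = C ^ (1 + k) / t ^ (2 * m₁ * k + m₂) * (k.factorial : ℝ) ^ (2 * σ) * N := by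
        rw [pow_add, pow_one]

variable {n : ℕ} {T : ℝ → L2sp n →L[ℂ] L2sp n} {s Cs t0 m1 m2 : ℝ}

theorem HasGSsmoothing.L2norm_monomialDeriv_le (hGS : HasGSsmoothing n T s Cs t0 m1 m2)
    (hs : 0 ≤ s) {A : ℝ} (hA : |Cs| ≤ A) {t : ℝ} (ht : 0 < t) (htt0 : t ≤ t0) {g : L2sp n}
    {u : smoothFun n} (hu : (T t g : En n → ℂ) =ᵐ[volume] u) (α β : Fin n → ℕ) :
    L2norm n (monomialDeriv α β u) ≤
      gelfandShilovBound (A / t ^ m2 * ‖g‖) (A / t ^ m1) (1 / (2 * s)) (∑ j, α j + ∑ j, β j) := by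
  obtain ⟨w, hw, hTw, hbound⟩ := hGS t ht htt0 g
  obtain rfl : w = u := (hw.continuous.ae_eq_iff_eq volume (contDiff_smoothFun u).continuous).1
    (hTw.symm.trans hu)
  have hA0 : 0 ≤ A := (abs_nonneg Cs).trans hA
  have hCs (q : ℕ) : Cs ^ q ≤ A ^ q :=
    (le_abs_self _).trans ((abs_pow Cs q).trans_le (pow_le_pow_left₀ (abs_nonneg Cs) hA q))
  rw [monomialDeriv_apply, gelfandShilovBound_div_rpow ht]
  refine (hbound α β).trans ?_
  rw [add_assoc 1, mul_assoc (_ / _)]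
  exact mul_le_mul_of_nonneg_right (mul_le_mul (div_le_div_of_nonneg_right (hCs _) (by positivity))
    (prod_factorial_rpow_mul_le α β (by positivity)) (by positivity) (by positivity))
    (norm_nonneg g)

theorem harmonic_oscillator_power_semigroup_estimate_general (hs0 : 0 < s) (hs1 : s ≤ 1)
    (hm1 : 0 ≤ m1) (hGS : HasGSsmoothing n T s Cs t0 m1 m2) :
    ∃ Ct : ℝ, 1 < Ct ∧ ∀ k : ℕ, ∀ g : L2sp n, ∀ t : ℝ, 0 < t → t ≤ t0 →
      ∀ u : En n → ℂ, ContDiff ℝ (⊤ : ℕ∞) u → (T t g : En n → ℂ) =ᵐ[volume] u →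
        L2norm n ((fun v : En n → ℂ => fun x => harmonicOsc v x + (n : ℂ) * v x)^[k] u) ≤
          Ct ^ (1 + k) / t ^ (2 * m1 * (k : ℝ) + m2) *
            ((k.factorial : ℝ)) ^ (1 / s) * ‖g‖ := by
  have hσ : 1 / 2 ≤ 1 / (2 * s) := by gcongr; linarith
  have hs : 1 / s = 2 * (1 / (2 * s)) := by field_simp
  obtain ⟨A, hA2, hCsA, ht0A⟩ : ∃ A : ℝ, 2 ≤ A ∧ |Cs| ≤ A ∧ t0 ^ m1 ≤ A :=
    ⟨max 2 (max |Cs| (t0 ^ m1)), by simp, by simp, by simp⟩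
  refine ⟨max A (6 * n * 4 ^ (1 / (2 * s)) * A ^ 2), lt_max_of_lt_left (by linarith), ?_⟩
  intro k g t ht htt0 u hu hTu
  lift u to smoothFun n using hu
  have hr : 1 ≤ A / t ^ m1 := (one_le_div (Real.rpow_pos_of_pos ht m1)).2
    ((Real.rpow_le_rpow ht.le htt0 hm1).trans ht0A)
  rw [← shiftedOsc_pow_apply, hs]
  exact (L2norm_shiftedOsc_pow_le ((Lp.memLp (T t g)).ae_eq hTu) hr hσ
    (hGS.L2norm_monomialDeriv_le hs0.le hCsA ht htt0 hTu) k).trans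
    (pow_mul_gelfandShilovBound_two_mul_le (by linarith) (by positivity) (norm_nonneg g)
      (by positivity) ht (le_max_left _ _) (le_max_right _ _) k)

end Smoothing

/-- **Estimate (GS02)**: for a contraction semigroup with Gelfand–Shilov
smoothing, ‖(H+n)^k T_t g‖_{L²} ≤ C̃^{1+k} t^{-(2m₁k+m₂)} (k!)^{1/s} ‖g‖. -/
theorem harmonic_oscillator_power_semigroup_estimate
    (n : ℕ) (T : ℝ → L2sp n →L[ℂ] L2sp n) (hT : IsContractionSG n T)
    (s Cs t0 m1 m2 : ℝ) (hs1 : 1 / 2 < s) (hs2 : s ≤ 1) (hCs : 1 < Cs)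
    (ht0 : 0 < t0) (ht0' : t0 ≤ 1) (hm1 : 0 < m1) (hm2 : 0 ≤ m2)
    (hGS : HasGSsmoothing n T s Cs t0 m1 m2) :
    ∃ Ct : ℝ, 1 < Ct ∧ ∀ k : ℕ, ∀ g : L2sp n, ∀ t : ℝ, 0 < t → t ≤ t0 →
      ∀ u : En n → ℂ, ContDiff ℝ (⊤ : ℕ∞) u → (T t g : En n → ℂ) =ᵐ[volume] u →
        L2norm n ((fun v : En n → ℂ => fun x => harmonicOsc v x + (n : ℂ) * v x)^[k] u) ≤
          Ct ^ (1 + k) / t ^ (2 * m1 * (k : ℝ) + m2) *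
            ((k.factorial : ℝ)) ^ (1 / s) * ‖g‖ :=
  harmonic_oscillator_power_semigroup_estimate_general (by linarith) hs2 hm1.le hGS

end
end
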